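/- Let r ≥ 2 and d ≥ 1 be integers and set d_1 = ⋯ = d_r = d. Let Z ⊆ W_{r,d}×⋯×W_{r,d} (r factors) be the set of tuples (F_1,…,F_r) with dim V(F_1,…,F_r) ≥ 1, and let L be the set of tuples (F_1,…,F_r) such that V(F_1,…,F_r) contains a line of ℙ^r. Then Z has a unique irreducible component of maximal dimension, and this component equals L. -/

import Mathlib

open MvPolynomial

noncomputable section

variable (K : Type*) [Field K] (M : Type*) [AddCommGroup M] [Module K M]

/-- Evaluation of a polynomial in the linear functionals of `M` at a point `v : M`.
These are precisely the polynomial functions on the affine space `M`. -/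
def polyEval (p : MvPolynomial (M →ₗ[K] K) K) (v : M) : K :=
  MvPolynomial.eval (fun φ : M →ₗ[K] K => φ v) p

lemma polyEval_mul (p q : MvPolynomial (M →ₗ[K] K) K) (v : M) :
    polyEval K M (p * q) v = polyEval K M p v * polyEval K M q v :=
  map_mul (MvPolynomial.eval fun φ : M →ₗ[K] K => φ v) p q

/-- The collection of Zariski-closed subsets of the affine space `M`:
common zero loci of families of polynomial functions. -/
def zariskiCloseds : Set (Set M) :=
  {s | ∃ S : Set (MvPolynomial (M →ₗ[K] K) K), s = {v | ∀ p ∈ S, polyEval K M p v = 0}}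

/-- The Zariski topology on an affine space (vector space) `M` over `K`. -/
def zariskiTopology : TopologicalSpace M := by
  refine TopologicalSpace.ofClosed (zariskiCloseds K M) ⟨{1}, ?_⟩ ?_ ?_
  · ext v
    simp [polyEval]
  · intro A hA
    choose S hS using fun a : A => hA a.2
    refine ⟨⋃ a : A, S a, ?_⟩
    ext v
    simp only [Set.mem_sInter, Set.mem_setOf_eq, Set.mem_iUnion]
    constructor
    · rintro h p ⟨a, hp⟩
      have := h a a.2
      rw [hS a] at this
      exact this p hp
    · intro h t ht
      have : v ∈ {w | ∀ p ∈ S ⟨t, ht⟩, polyEval K M p w = 0} :=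
        fun p hp => h p ⟨⟨t, ht⟩, hp⟩
      rw [← hS ⟨t, ht⟩] at this
      exact this
  · rintro s ⟨S₁, rfl⟩ t ⟨S₂, rfl⟩
    refine ⟨Set.image2 (· * ·) S₁ S₂, ?_⟩
    ext v
    simp only [Set.mem_union, Set.mem_setOf_eq]
    constructor
    · rintro (h | h) p ⟨p₁, h₁, p₂, h₂, rfl⟩
      · show polyEval K M (p₁ * p₂) v = 0
        rw [polyEval_mul, h p₁ h₁, zero_mul]
      · show polyEval K M (p₁ * p₂) v = 0
        rw [polyEval_mul, h p₂ h₂, mul_zero]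
    · intro h
      by_contra hc
      push_neg at hc
      obtain ⟨⟨p₁, h₁, hv₁⟩, ⟨p₂, h₂, hv₂⟩⟩ := hc
      have h12 := h (p₁ * p₂) ⟨p₁, h₁, p₂, h₂, rfl⟩
      rw [polyEval_mul] at h12
      exact mul_ne_zero hv₁ hv₂ h12

/-- The dimension of a subset of affine space: the Krull dimension of its Zariski closure. -/
def dimSet {M : Type*} [TopologicalSpace M] (s : Set M) : WithBot ℕ∞ :=
  topologicalKrullDim ↥(closure s)

/-- `vdimGE r n F m` says that the common projective vanishing locus
`V(F 0, …, F (n-1)) ⊆ ℙ^r` has dimension at least `m` (with `dim ∅ = -∞`).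
This is encoded via the Krull dimension of the homogeneous coordinate ring of the
affine cone: `dim V(F) ≥ m` iff the cone has Krull dimension at least `max m 0 + 1`. -/
def vdimGE {K : Type*} [Field K] (r n : ℕ) (F : Fin n → MvPolynomial (Fin (r + 1)) K)
    (m : ℤ) : Prop :=
  ((m.toNat + 1 : ℕ) : WithBot ℕ∞) ≤
    ringKrullDim (MvPolynomial (Fin (r + 1)) K ⧸ Ideal.span (Set.range F))

end

noncomputable section Statement2

open MvPolynomial

variable (K : Type*) [Field K]

/-- The affine space `W_{r, d 0} × ⋯ × W_{r, d (n-1)}` of `n`-tuples of homogeneous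
forms of degrees `d 0, …, d (n-1)` in the variables `x_0, …, x_r`. -/
abbrev tupleSpace (r n : ℕ) (d : Fin n → ℕ) : Type _ :=
  (i : Fin n) → ↥(homogeneousSubmodule (Fin (r + 1)) K (d i))

/-- The Zariski topology on the affine space of tuples of forms. -/
instance (r n : ℕ) (d : Fin n → ℕ) : TopologicalSpace (tupleSpace K r n d) :=
  zariskiTopology K _

/-- The forms `F 0, …, F (n-1)` all vanish on a common line of `ℙ^r`. -/
def vanishOnCommonLine {r n : ℕ} {d : Fin n → ℕ} (F : tupleSpace K r n d) : Prop :=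
  ∃ v w : Fin (r + 1) → K, LinearIndependent K ![v, w] ∧
    ∀ i : Fin n, ∀ s t : K,
      MvPolynomial.eval (fun j => s * v j + t * w j) (F i : MvPolynomial (Fin (r + 1)) K) = 0

/-!
If `V(F)` has positive dimension and contains no line, it contains an irreducible `X` of positive
dimension spanning a `ℙ^n` with `n ≥ 2`. By Castelnuovo's argument `d * n + 1` general points of `X`
impose independent conditions on forms of degree `d`, as against `d + 1` for the points of a line.
Counting parameters of the configurations of `d * n + 1` points spanning a `ℙ^n`, the `r`-tuples
vanishing on such a configuration, with two parameters free on each of the points, form families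
of smaller dimension than `L`. Algebraic independence of functions on a set replaces the dimension
of generic fibres throughout. `L` is closed by elimination theory and irreducible as the image of
linear families of tuples under the linear group.
-/

section KrullDimension

variable {A : Type*} [CommRing A]

lemma ringKrullDim_eq_of_isIntegral {R : Type*} [CommRing R] [Algebra R A] [Algebra.IsIntegral R A]
    [FaithfulSMul R A] : ringKrullDim A = ringKrullDim R := by
  apply le_antisymm
  · exact Order.krullDim_le_of_strictMono (PrimeSpectrum.comap (algebraMap R A)) fun p q hpq =>
      Ideal.IsIntegral.comap_lt_comap (I := p.asIdeal) (J := q.asIdeal) hpq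
  · refine iSup_le fun l => ?_
    obtain ⟨Q, -, _, hQ⟩ := Ideal.exists_ideal_over_prime_of_isIntegral (S := A)
      l.head.asIdeal ⊥ (by
        rw [← RingHom.ker_eq_comap_bot, (RingHom.injective_iff_ker_eq_bot _).1
          (FaithfulSMul.algebraMap_injective R A)]
        exact bot_le)
    have : Q.LiesOver l.head.asIdeal := ⟨hQ.symm⟩
    obtain ⟨M, hM, -⟩ := Ideal.exists_ltSeries_of_hasGoingUp l Q
    rw [← hM]
    exact le_iSup (fun p : LTSeries (PrimeSpectrum A) => ((p.length : ℕ∞) : WithBot ℕ∞)) M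

lemma exists_isTranscendenceBasis_ringKrullDim_eq [IsDomain A] [Algebra K A]
    [Algebra.FiniteType K A] :
    ∃ (n : ℕ) (y : Fin n → A), IsTranscendenceBasis K y ∧ ringKrullDim A = n := by
  obtain ⟨n, g, hg, hint⟩ := exists_integral_inj_algHom_of_fg K A
  algebraize [g.toRingHom]
  have : IsScalarTower K (MvPolynomial (Fin n) K) A := .of_algHom g
  have : Algebra.IsIntegral (MvPolynomial (Fin n) K) A := ⟨hint⟩
  have : FaithfulSMul (MvPolynomial (Fin n) K) A := (faithfulSMul_iff_algebraMap_injective _ _).2 hg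
  refine ⟨n, algebraMap _ A ∘ X, (IsTranscendenceBasis.mvPolynomial (Fin n) K).algebraMap_comp, ?_⟩
  rw [ringKrullDim_eq_of_isIntegral (R := MvPolynomial (Fin n) K)]
  simp [MvPolynomial.ringKrullDim_of_isNoetherianRing]

variable {K} in
lemma natCard_le_ringKrullDim_of_algebraicIndependent [IsDomain A] [Algebra K A]
    [Algebra.FiniteType K A] {T : Type*} [Finite T] {z : T → A} (hz : AlgebraicIndependent K z) :
    (Nat.card T : WithBot ℕ∞) ≤ ringKrullDim A := by
  obtain ⟨n, y, hy, hn⟩ := exists_isTranscendenceBasis_ringKrullDim_eq K (A := A)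
  have hle := hz.lift_cardinalMk_le_trdeg
  have htrdeg := hy.lift_cardinalMk_eq_trdeg
  rw [Cardinal.mk_fin, Cardinal.lift_natCast, Cardinal.lift_id'] at htrdeg
  rw [← Nat.cast_card, ← htrdeg, Cardinal.lift_natCast, Cardinal.lift_natCast, Nat.cast_le] at hle
  rw [hn]
  exact_mod_cast hle

variable {K} in
lemma exists_algebraicIndependent_comp_ringKrullDim_eq [IsDomain A] [Algebra K A]
    [Algebra.FiniteType K A] {σ : Type*} {x : σ → A} (hx : Algebra.adjoin K (Set.range x) = ⊤) :
    ∃ (n : ℕ) (c : Fin n → σ), AlgebraicIndependent K (x ∘ c) ∧ ringKrullDim A = n := by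
  obtain ⟨n, y, hy, hn⟩ := exists_isTranscendenceBasis_ringKrullDim_eq K (A := A)
  have : Algebra.IsAlgebraic (Algebra.adjoin K (Set.range x)) A := by
    rw [hx]
    exact ⟨fun a => isAlgebraic_algebraMap (⟨a, trivial⟩ : (⊤ : Subalgebra K A))⟩
  obtain ⟨t, hts, ht⟩ := exists_isTranscendenceBasis_subset (R := K) (Set.range x)
  have hcard : Cardinal.mk t = n := by simpa using (hy.lift_cardinalMk_eq ht).symm
  obtain ⟨e⟩ : Nonempty (Fin n ≃ t) := Cardinal.lift_mk_eq'.1 (by simp [hcard])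
  choose c hc using fun i => hts (e i).2
  refine ⟨n, c, ?_, hn⟩
  have hxc : x ∘ c = (↑) ∘ e := funext hc
  exact hxc ▸ ht.1.comp e e.injective

end KrullDimension

variable {K} in
lemma aeval_fun_apply {T α : Type*} (f : T → α → K) (p : MvPolynomial T K)
    (v : α) : aeval f p v = eval (fun t => f t v) p := by
  rw [← aeval_eq_eval]
  exact comp_aeval_apply f (Pi.evalAlgHom K (fun _ : α => K) v) p

section PolynomialMaps

variable (M : Type*) [AddCommGroup M] [Module K M] {N : Type*} [AddCommGroup N] [Module K N]
  {P : Type*} [AddCommGroup P] [Module K P]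

/-- The algebra of polynomial functions on the vector space `M`, generated by the linear
functionals; it is the coordinate ring of the affine space `M`, in coordinate-free form. -/
def regularFunctions : Subalgebra K (M → K) :=
  Algebra.adjoin K (Set.range fun φ : M →ₗ[K] K => ⇑φ)

variable {M}

/-- Polynomial maps between vector spaces: the composite with every linear functional of the
codomain is a polynomial function. -/
@[fun_prop]
def IsPolynomialMap (Φ : M → N) : Prop :=
  ∀ ℓ : N →ₗ[K] K, (fun v => ℓ (Φ v)) ∈ regularFunctions K M

variable {K}

lemma isPolynomialMap_iff_mem {f : M → K} :
    IsPolynomialMap K f ↔ f ∈ regularFunctions K M := by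
  refine ⟨fun hf => hf LinearMap.id, fun hf ℓ => ?_⟩
  have hℓ : (fun v => ℓ (f v)) = ℓ 1 • f := funext fun v => by
    rw [Pi.smul_apply, smul_eq_mul, mul_comm, ← smul_eq_mul, ← map_smul, smul_eq_mul, mul_one]
  exact hℓ ▸ Subalgebra.smul_mem _ hf _

lemma mem_regularFunctions_iff_polyEval {f : M → K} :
    f ∈ regularFunctions K M ↔ ∃ p, polyEval K M p = f := by
  have hrange : regularFunctions K M =
      (aeval (R := K) fun φ : M →ₗ[K] K => (φ : M → K)).range :=
    Algebra.adjoin_range_eq_range_aeval K _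
  have heval : ∀ p, polyEval K M p = aeval (fun φ : M →ₗ[K] K => (φ : M → K)) p := fun p =>
    funext fun v => by rw [aeval_fun_apply, polyEval]
  simp only [hrange, AlgHom.mem_range, heval]

@[fun_prop]
lemma isPolynomialMap_linearMap (φ : M →ₗ[K] N) : IsPolynomialMap K φ := fun ℓ =>
  Algebra.subset_adjoin ⟨ℓ ∘ₗ φ, rfl⟩

lemma exists_isHomogeneous_one_eval_eq {σ : Type*} [Finite σ] (φ : (σ → K) →ₗ[K] K) :
    ∃ p : MvPolynomial σ K, p.IsHomogeneous 1 ∧ ∀ x, eval x p = φ x := by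
  classical
  have := Fintype.ofFinite σ
  let A := LinearMap.toMatrix' (LinearMap.pi fun _ : Unit => φ)
  refine ⟨A.toMvPolynomial (), A.toMvPolynomial_isHomogeneous (), fun x => ?_⟩
  rw [Matrix.toMvPolynomial_eval_eq_apply, LinearMap.toMatrix'_mulVec, LinearMap.pi_apply]

namespace IsPolynomialMap

@[fun_prop]
lemma id : IsPolynomialMap K fun v : M => v := isPolynomialMap_linearMap LinearMap.id

@[fun_prop]
lemma const (w : N) : IsPolynomialMap K fun _ : M => w := fun ℓ =>
  (regularFunctions K M).algebraMap_mem (ℓ w)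

@[fun_prop]
lemma comp {Ψ : N → P} {Φ : M → N} (hΨ : IsPolynomialMap K Ψ) (hΦ : IsPolynomialMap K Φ) :
    IsPolynomialMap K fun v => Ψ (Φ v) := fun ℓ => by
  suffices ∀ f ∈ regularFunctions K N, (fun v => f (Φ v)) ∈ regularFunctions K M from
    this _ (hΨ ℓ)
  intro f hf
  induction hf using Algebra.adjoin_induction with
  | mem f hf => obtain ⟨φ, rfl⟩ := hf; exact hΦ φ
  | algebraMap a => exact Subalgebra.algebraMap_mem _ a
  | add f g _ _ hf hg => exact add_mem hf hg
  | mul f g _ _ hf hg => exact mul_mem hf hg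

@[fun_prop]
lemma add {Φ Ψ : M → N} (hΦ : IsPolynomialMap K Φ) (hΨ : IsPolynomialMap K Ψ) :
    IsPolynomialMap K fun v => Φ v + Ψ v := fun ℓ => by
  simpa only [map_add] using! add_mem (hΦ ℓ) (hΨ ℓ)

@[fun_prop]
lemma sub {Φ Ψ : M → N} (hΦ : IsPolynomialMap K Φ) (hΨ : IsPolynomialMap K Ψ) :
    IsPolynomialMap K fun v => Φ v - Ψ v := fun ℓ => by
  simpa only [map_sub] using! sub_mem (hΦ ℓ) (hΨ ℓ)

@[fun_prop]
lemma smul {f : M → K} {Φ : M → N} (hf : IsPolynomialMap K f) (hΦ : IsPolynomialMap K Φ) :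
    IsPolynomialMap K fun v => f v • Φ v := fun ℓ => by
  simpa only [map_smul] using! mul_mem (isPolynomialMap_iff_mem.1 hf) (hΦ ℓ)

@[fun_prop]
lemma mul {f g : M → K} (hf : IsPolynomialMap K f) (hg : IsPolynomialMap K g) :
    IsPolynomialMap K fun v => f v * g v := hf.smul hg

@[fun_prop]
lemma sum {ι : Type*} {s : Finset ι} {Φ : ι → M → N} (hΦ : ∀ i ∈ s, IsPolynomialMap K (Φ i)) :
    IsPolynomialMap K fun v => ∑ i ∈ s, Φ i v := fun ℓ => by
  simpa only [map_sum, Finset.sum_fn] using sum_mem fun i hi => hΦ i hi ℓ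

@[fun_prop]
lemma prod {ι : Type*} {s : Finset ι} {f : ι → M → K} (hf : ∀ i ∈ s, IsPolynomialMap K (f i)) :
    IsPolynomialMap K fun v => ∏ i ∈ s, f i v := by
  simpa only [isPolynomialMap_iff_mem, Finset.prod_fn] using
    prod_mem fun i hi => isPolynomialMap_iff_mem.1 (hf i hi)

@[fun_prop]
lemma apply {ι : Type*} {E : ι → Type*} [∀ i, AddCommGroup (E i)] [∀ i, Module K (E i)] (i : ι) :
    IsPolynomialMap K fun v : ∀ i, E i => v i :=
  isPolynomialMap_linearMap (LinearMap.proj (R := K) (φ := E) i)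

@[fun_prop]
lemma fst : IsPolynomialMap K fun v : M × N => v.1 := isPolynomialMap_linearMap (.fst K M N)

@[fun_prop]
lemma snd : IsPolynomialMap K fun v : M × N => v.2 := isPolynomialMap_linearMap (.snd K M N)

@[fun_prop]
lemma pi {ι : Type*} [Finite ι] {E : ι → Type*} [∀ i, AddCommGroup (E i)] [∀ i, Module K (E i)]
    {Φ : M → ∀ i, E i} (hΦ : ∀ i, IsPolynomialMap K fun v => Φ v i) : IsPolynomialMap K Φ := by
  classical
  have := Fintype.ofFinite ι
  have hsum : Φ = fun v => ∑ i, LinearMap.single K E i (Φ v i) :=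
    funext fun v => (Finset.univ_sum_single (Φ v)).symm
  rw [hsum]
  fun_prop

@[fun_prop]
lemma det {ι : Type*} [Fintype ι] [DecidableEq ι] {A : M → Matrix ι ι K}
    (hA : ∀ i j, IsPolynomialMap K fun v => A v i j) : IsPolynomialMap K fun v => (A v).det := by
  simp only [Matrix.det_apply']
  fun_prop

@[fun_prop]
lemma adjugate {ι : Type*} [Fintype ι] [DecidableEq ι] {A : M → Matrix ι ι K}
    (hA : ∀ i j, IsPolynomialMap K fun v => A v i j) (i j : ι) :
    IsPolynomialMap K fun v => (A v).adjugate i j := by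
  simp only [Matrix.adjugate_apply]
  refine det fun a b => ?_
  obtain rfl | hne := eq_or_ne a j
  · simpa only [Matrix.updateRow_self] using const _
  · simpa only [Matrix.updateRow_ne hne] using hA a b

@[fun_prop]
lemma mvPolynomial_eval {τ : Type*} {x : M → τ → K} (hx : ∀ t, IsPolynomialMap K fun v => x v t)
    (p : MvPolynomial τ K) : IsPolynomialMap K fun v => eval (x v) p := by
  induction p using MvPolynomial.induction_on with
  | C a => simpa only [eval_C] using const a
  | add p q hp hq => simpa only [map_add] using add hp hq
  | mul_X p t hp => simpa only [map_mul, eval_X] using mul hp (hx t)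

lemma exists_mvPolynomial {σ : Type*} [Finite σ] {f : (σ → K) → K} (hf : IsPolynomialMap K f) :
    ∃ p : MvPolynomial σ K, ∀ x, f x = eval x p := by
  rw [isPolynomialMap_iff_mem] at hf
  induction hf using Algebra.adjoin_induction with
  | mem f hf =>
    obtain ⟨φ, rfl⟩ := hf
    obtain ⟨p, -, hp⟩ := exists_isHomogeneous_one_eval_eq φ
    exact ⟨p, fun x => (hp x).symm⟩
  | algebraMap a => exact ⟨C a, fun x => by rw [eval_C]; rfl⟩
  | add f g _ _ hf hg =>
    obtain ⟨⟨p, hp⟩, q, hq⟩ := And.intro hf hg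
    exact ⟨p + q, fun x => by rw [map_add, ← hp, ← hq, Pi.add_apply]⟩
  | mul f g _ _ hf hg =>
    obtain ⟨⟨p, hp⟩, q, hq⟩ := And.intro hf hg
    exact ⟨p * q, fun x => by rw [map_mul, ← hp, ← hq, Pi.mul_apply]⟩

lemma exists_polynomial {f : K → K} (hf : IsPolynomialMap K f) :
    ∃ p : Polynomial K, ∀ t, f t = p.eval t := by
  obtain ⟨p, hp⟩ := (hf.comp (apply (E := fun _ : Unit => K) ())).exists_mvPolynomial
  refine ⟨aeval (fun _ => Polynomial.X) p, fun t => (hp fun _ => t).trans ?_⟩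
  rw [← Polynomial.coe_aeval_eq_eval, comp_aeval_apply, Polynomial.aeval_X, aeval_eq_eval]

end IsPolynomialMap

variable (K M) in
lemma exists_surjective_mvPolynomial_regularFunctions [FiniteDimensional K M] :
    ∃ f : MvPolynomial (Fin (Module.finrank K M)) K →ₐ[K] regularFunctions K M,
      Function.Surjective f := by
  let b := Module.finBasis K M
  have hmem : ∀ i, (b.coord i : M → K) ∈ regularFunctions K M := fun i =>
    Algebra.subset_adjoin ⟨b.coord i, rfl⟩
  refine ⟨aeval fun i => ⟨_, hmem i⟩, ?_⟩
  rw [← AlgHom.range_eq_top, ← Algebra.adjoin_range_eq_range_aeval]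
  refine Subalgebra.map_injective (f := (regularFunctions K M).val) Subtype.val_injective ?_
  rw [AlgHom.map_adjoin, ← Set.range_comp, Algebra.map_top, Subalgebra.range_val]
  refine le_antisymm (Algebra.adjoin_le (Set.range_subset_iff.2 hmem))
    (Algebra.adjoin_le (Set.range_subset_iff.2 fun φ => ?_))
  have hφ : (φ : M → K) = ∑ i, φ (b i) • (b.coord i : M → K) := by
    ext v
    conv_lhs => rw [← b.sum_repr v, map_sum]
    simp [mul_comm]
  change (φ : M → K) ∈ _
  rw [hφ]
  exact sum_mem fun i _ => Subalgebra.smul_mem _ (Algebra.subset_adjoin (Set.mem_range_self i)) _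

instance [FiniteDimensional K M] : Algebra.FiniteType K (regularFunctions K M) :=
  have ⟨f, hf⟩ := exists_surjective_mvPolynomial_regularFunctions K M
  .of_surjective f hf

end PolynomialMaps

section AlgIndepOn

variable {K} {T U α β : Type*}

/-- Algebraic independence of the restrictions to `S` of a family of `K`-valued functions, i.e.
the Zariski density of the image of `S` under the map with components `f`. -/
def AlgIndepOn (f : T → α → K) (S : Set α) : Prop :=
  AlgebraicIndependent K fun t (x : S) => f t x

lemma algIndepOn_iff {f : T → α → K} {S : Set α} :
    AlgIndepOn f S ↔ ∀ p : MvPolynomial T K, (∀ x ∈ S, eval (fun t => f t x) p = 0) → p = 0 := by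
  simp only [AlgIndepOn, algebraicIndependent_iff, funext_iff, aeval_fun_apply, Pi.zero_apply,
    Subtype.forall]

lemma eval_map_eval_sumAlgEquiv (y : U → K) (x : T → K) (p : MvPolynomial (U ⊕ T) K) :
    eval y (map (eval x) (sumAlgEquiv K U T p)) = eval (Sum.elim y x) p := by
  induction p using MvPolynomial.induction_on with
  | C a => simp
  | add p q hp hq => simp only [map_add, hp, hq]
  | mul_X p t hp => cases t <;> simp only [map_mul, hp] <;> simp

namespace AlgIndepOn

lemma of_forall_exists_eq {f : T → α → K} {S : Set α} (h : AlgIndepOn f S) {f' : T → β → K}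
    {S' : Set β} (hS : ∀ x ∈ S, ∃ y ∈ S', ∀ t, f' t y = f t x) : AlgIndepOn f' S' := by
  refine algIndepOn_iff.2 fun p hp => algIndepOn_iff.1 h p fun x hx => ?_
  obtain ⟨y, hy, hyx⟩ := hS x hx
  simpa only [hyx] using hp y hy

lemma mono {f : T → α → K} {S S' : Set α} (h : AlgIndepOn f S) (hS : S ⊆ S') : AlgIndepOn f S' :=
  h.of_forall_exists_eq fun x hx => ⟨x, hS hx, fun _ => rfl⟩

lemma exists_of_iUnion {ι : Type*} [Finite ι] {f : T → α → K} {S : ι → Set α}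
    (h : AlgIndepOn f (⋃ i, S i)) : ∃ i, AlgIndepOn f (S i) := by
  have := Fintype.ofFinite ι
  by_contra! hS
  simp only [algIndepOn_iff, not_forall] at hS
  choose p hp hp0 using hS
  refine Finset.prod_ne_zero_iff.2 (fun i _ => hp0 i) (algIndepOn_iff.1 h (∏ i, p i) fun x hx => ?_)
  obtain ⟨i, hi⟩ := Set.mem_iUnion.1 hx
  rw [map_prod]
  exact Finset.prod_eq_zero (Finset.mem_univ i) (hp i x hi)

lemma sumElim {f : T → α → K} {S : Set α} (hf : AlgIndepOn f S) {g : U → β → K} {E : α → Set β}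
    (hg : ∀ x ∈ S, AlgIndepOn g (E x)) :
    AlgIndepOn (Sum.elim (fun u z => g u z.2) (fun t z => f t z.1))
      {z : α × β | z.1 ∈ S ∧ z.2 ∈ E z.1} := by
  refine algIndepOn_iff.2 fun p hp => (sumAlgEquiv K U T).injective ?_
  ext1 m
  rw [map_zero, coeff_zero]
  refine algIndepOn_iff.1 hf _ fun x hx => ?_
  have hfibre : map (eval fun t => f t x) (sumAlgEquiv K U T p) = 0 :=
    algIndepOn_iff.1 (hg x hx) _ fun y hy => by
      rw [eval_map_eval_sumAlgEquiv, ← hp (x, y) ⟨hx, hy⟩]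
      exact congrArg (eval · p) (_root_.funext (Sum.rec (fun _ => rfl) fun _ => rfl))
  rw [← coeff_map, hfibre, coeff_zero]

lemma coordinates_univ [Infinite K] : AlgIndepOn (fun t (z : T → K) => z t) Set.univ :=
  algIndepOn_iff.2 fun _ hp => funext fun z => (hp z trivial).trans (map_zero _).symm

lemma natCard_le_finrank {M : Type*} [AddCommGroup M] [Module K M] [FiniteDimensional K M]
    {f : T → M → K} (hf : ∀ t, IsPolynomialMap K (f t)) {S : Set M} (h : AlgIndepOn f S) :
    Nat.card T ≤ Module.finrank K M := by
  obtain ⟨φ, hφ⟩ := exists_surjective_mvPolynomial_regularFunctions K M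
  let restriction : (M → K) →ₐ[K] S → K := AlgHom.pi fun x => Pi.evalAlgHom K _ x.1
  have hindep : AlgebraicIndependent K
      fun t => (⟨f t, isPolynomialMap_iff_mem.1 (hf t)⟩ : regularFunctions K M) :=
    .of_comp (restriction.comp (regularFunctions K M).val) h
  have htrdeg := lift_trdeg_le_of_surjective φ hφ
  rw [trdeg_of_isDomain, Cardinal.mk_fin, Cardinal.lift_natCast, Cardinal.lift_natCast,
    Cardinal.lift_le_nat_iff] at htrdeg
  have hle := hindep.lift_cardinalMk_le_trdeg.trans (Cardinal.lift_le.2 htrdeg)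
  rw [Cardinal.lift_natCast, Cardinal.lift_le_nat_iff] at hle
  exact (Cardinal.toNat_le_toNat hle Cardinal.natCast_lt_aleph0).trans_eq (Cardinal.toNat_natCast _)

end AlgIndepOn

end AlgIndepOn

section ZariskiTopology

variable {K} {M N : Type*} [AddCommGroup M] [Module K M] [AddCommGroup N] [Module K N]

variable (K M) in
/-- The topology carried by the vector space `M` is the Zariski topology. -/
class IsZariski [τ : TopologicalSpace M] : Prop where
  eq_zariskiTopology : τ = zariskiTopology K M

instance (r n : ℕ) (d : Fin n → ℕ) : IsZariski K (tupleSpace K r n d) := ⟨rfl⟩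

variable [TopologicalSpace M] [IsZariski K M] [TopologicalSpace N] [IsZariski K N]

variable (K) in
lemma isClosed_iff_exists_isPolynomialMap {s : Set M} : IsClosed s ↔
    ∃ F : Set (M → K), (∀ f ∈ F, IsPolynomialMap K f) ∧ s = {v | ∀ f ∈ F, f v = 0} := by
  have hclosed : IsClosed s ↔ s ∈ zariskiCloseds K M := by
    rw [← isOpen_compl_iff, IsZariski.eq_zariskiTopology (K := K) (M := M)]
    change sᶜᶜ ∈ zariskiCloseds K M ↔ _
    rw [compl_compl]
  rw [hclosed]
  constructor
  · rintro ⟨S, rfl⟩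
    refine ⟨polyEval K M '' S, ?_, by simp⟩
    rintro _ ⟨p, -, rfl⟩
    exact isPolynomialMap_iff_mem.2 (mem_regularFunctions_iff_polyEval.2 ⟨p, rfl⟩)
  · rintro ⟨F, hF, rfl⟩
    refine ⟨polyEval K M ⁻¹' F, Set.ext fun v => ⟨fun hv p hp => hv _ hp, fun hv f hf => ?_⟩⟩
    obtain ⟨p, rfl⟩ := mem_regularFunctions_iff_polyEval.1 (isPolynomialMap_iff_mem.1 (hF f hf))
    exact hv p hf

lemma isClosed_setOf_eq_zero {f : M → K} (hf : IsPolynomialMap K f) : IsClosed {v | f v = 0} :=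
  (isClosed_iff_exists_isPolynomialMap K).2 ⟨{f}, by simpa using hf, by simp⟩

lemma IsPolynomialMap.eq_zero_of_mem_closure {f : M → K} (hf : IsPolynomialMap K f) {S : Set M}
    (hS : ∀ x ∈ S, f x = 0) {v : M} (hv : v ∈ closure S) : f v = 0 :=
  closure_minimal hS (isClosed_setOf_eq_zero hf) hv

lemma exists_isPolynomialMap_of_notMem_isClosed {Z : Set M} (hZ : IsClosed Z) {v : M}
    (hv : v ∉ Z) : ∃ f : M → K, IsPolynomialMap K f ∧ (∀ x ∈ Z, f x = 0) ∧ f v ≠ 0 := by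
  obtain ⟨F, hF, rfl⟩ := (isClosed_iff_exists_isPolynomialMap K).1 hZ
  simp only [Set.mem_ofPred_eq, not_forall] at hv
  obtain ⟨f, hf, hfv⟩ := hv
  exact ⟨f, hF f hf, fun x hx => hx f hf, hfv⟩

lemma IsPolynomialMap.continuous {Φ : M → N} (hΦ : IsPolynomialMap K Φ) : Continuous Φ := by
  refine continuous_iff_isClosed.2 fun s hs => ?_
  obtain ⟨F, hF, rfl⟩ := (isClosed_iff_exists_isPolynomialMap K).1 hs
  refine (isClosed_iff_exists_isPolynomialMap K).2 ⟨(· ∘ Φ) '' F, ?_, by simp⟩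
  rintro _ ⟨f, hf, rfl⟩
  exact (hF f hf).comp hΦ

variable (K M) in
lemma isIrreducible_univ [Infinite K] : IsIrreducible (Set.univ : Set M) := by
  refine ⟨Set.univ_nonempty, isPreirreducible_iff_isClosed_union_isClosed.2
    fun Z₁ Z₂ hZ₁ hZ₂ hcover => ?_⟩
  by_contra! hne
  simp only [Set.univ_subset_iff, Set.ne_univ_iff_exists_notMem] at hne
  obtain ⟨⟨v, hv⟩, w, hw⟩ := hne
  obtain ⟨f, hf, hfZ, hfv⟩ := exists_isPolynomialMap_of_notMem_isClosed (K := K) hZ₁ hv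
  obtain ⟨g, hg, hgZ, hgw⟩ := exists_isPolynomialMap_of_notMem_isClosed (K := K) hZ₂ hw
  have hline : IsPolynomialMap K fun t : K => v + t • (w - v) := by fun_prop
  obtain ⟨p, hp⟩ := (hf.comp hline).exists_polynomial
  obtain ⟨q, hq⟩ := (hg.comp hline).exists_polynomial
  have hpq : p * q = 0 := Polynomial.funext fun t => by
    rw [Polynomial.eval_mul, ← hp, ← hq, Polynomial.eval_zero]
    exact (hcover (Set.mem_univ (v + t • (w - v)))).elim
      (fun h => mul_eq_zero_of_left (hfZ _ h) _) (fun h => mul_eq_zero_of_right _ (hgZ _ h))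
  obtain rfl | rfl := mul_eq_zero.1 hpq
  · exact hfv (by simpa using hp 0)
  · exact hgw (by simpa using hq 1)

lemma IsPolynomialMap.isIrreducible_image [Infinite K] {P : Type*} [AddCommGroup P] [Module K P]
    {Φ : P → M} (hΦ : IsPolynomialMap K Φ) {f : P → K} (hf : IsPolynomialMap K f)
    (hne : ∃ p, f p ≠ 0) : IsIrreducible (Φ '' {p | f p ≠ 0}) := by
  let := zariskiTopology K P
  have : IsZariski K P := ⟨rfl⟩
  have hopen : IsOpen {p | f p ≠ 0} := (isClosed_setOf_eq_zero hf).isOpen_compl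
  exact .image ⟨hne, (isIrreducible_univ K P).2.open_subset hopen (Set.subset_univ _)⟩ Φ
    hΦ.continuous.continuousOn

lemma AlgIndepOn.of_subset_closure {T : Type*} {f : T → M → K} (hf : ∀ t, IsPolynomialMap K (f t))
    {S D : Set M} (h : AlgIndepOn f S) (hS : S ⊆ closure D) : AlgIndepOn f D :=
  algIndepOn_iff.2 fun p hp => algIndepOn_iff.1 h p fun _ hx =>
    (IsPolynomialMap.mvPolynomial_eval hf p).eq_zero_of_mem_closure hp (hS hx)

end ZariskiTopology

section Dimension

lemma topologicalKrullDim_eq_of_isInducing {X Y : Type*} [TopologicalSpace X] [TopologicalSpace Y]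
    {f : Y → X} (hf : Topology.IsInducing f)
    (hclosure : ∀ Z : Set X, IsClosed Z → Z ⊆ closure (Z ∩ Set.range f)) :
    topologicalKrullDim Y = topologicalKrullDim X := by
  refine le_antisymm hf.topologicalKrullDim_le ?_
  have hsub : ∀ {Z A : Set X}, IsClosed Z → IsClosed A → f ⁻¹' Z ⊆ f ⁻¹' A → Z ⊆ A :=
    fun hZ hA h => (hclosure _ hZ).trans (closure_minimal (by rintro _ ⟨hy, y, rfl⟩; exact h hy) hA)
  have hirr : ∀ Z : TopologicalSpace.IrreducibleCloseds X, IsIrreducible (f ⁻¹' (Z : Set X)) := by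
    refine fun Z => ⟨?_, isPreirreducible_iff_isClosed_union_isClosed.2 fun A B hA hB hcover => ?_⟩
    · by_contra! hempty
      exact Z.2.nonempty.ne_empty (Set.subset_empty_iff.1
        (hsub Z.3 isClosed_empty (hempty.trans_subset (Set.empty_subset _))))
    · obtain ⟨A', hA', rfl⟩ := hf.isClosed_iff.1 hA
      obtain ⟨B', hB', rfl⟩ := hf.isClosed_iff.1 hB
      have hZ : (Z : Set X) ⊆ A' ∪ B' := hsub Z.3 (hA'.union hB') hcover
      exact (isPreirreducible_iff_isClosed_union_isClosed.1 Z.2.2 _ _ hA' hB' hZ).imp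
        (Set.preimage_mono ·) (Set.preimage_mono ·)
  refine Order.krullDim_le_of_strictMono (β := TopologicalSpace.IrreducibleCloseds Y)
    (fun Z => ⟨f ⁻¹' Z, hirr Z, Z.3.preimage hf.continuous⟩) fun Z W hZW => ?_
  exact lt_of_le_not_ge (fun y hy => hZW.le hy) fun h => hZW.not_ge (hsub W.3 Z.3 h)

lemma exists_algHom_ker_eq_of_isMaximal [IsAlgClosed K] {A : Type*} [CommRing A] [Algebra K A]
    [Algebra.FiniteType K A] (m : Ideal A) [m.IsMaximal] :
    ∃ ψ : A →ₐ[K] K, RingHom.ker ψ = m := by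
  let _ : Field (A ⧸ m) := Ideal.Quotient.field m
  have : Module.Finite K (A ⧸ m) := finite_of_finite_type_of_isJacobsonRing K _
  let e : K ≃ₐ[K] A ⧸ m :=
    .ofBijective (Algebra.ofId K _) IsAlgClosed.algebraMap_bijective_of_isIntegral
  refine ⟨e.symm.toAlgHom.comp (Ideal.Quotient.mkₐ K m), ?_⟩
  ext a
  simp [RingHom.mem_ker, Ideal.Quotient.eq_zero_iff_mem]

variable {M : Type*} [AddCommGroup M] [Module K M]

/-- The coordinate ring of a subset `S` of the affine space `M`: the restrictions to `S` of
polynomial functions. -/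
def coordinateRing (S : Set M) : Subalgebra K (S → K) :=
  (regularFunctions K M).map (AlgHom.pi fun x : S => Pi.evalAlgHom K _ x.1)

variable {K}

/-- The restriction to `S` of a polynomial function, as an element of the coordinate ring. -/
def IsPolynomialMap.restrict {f : M → K} (hf : IsPolynomialMap K f) (S : Set M) :
    coordinateRing K S :=
  ⟨fun x => f x, f, isPolynomialMap_iff_mem.1 hf, rfl⟩

lemma exists_restrict_eq {S : Set M} (g : coordinateRing K S) :
    ∃ (f : M → K) (hf : IsPolynomialMap K f), hf.restrict S = g := by
  obtain ⟨_, f, hf, rfl⟩ := g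
  exact ⟨f, isPolynomialMap_iff_mem.2 hf, rfl⟩

lemma restrict_eq_zero_iff {S : Set M} {f : M → K} {hf : IsPolynomialMap K f} :
    hf.restrict S = 0 ↔ ∀ x ∈ S, f x = 0 := by
  simp [IsPolynomialMap.restrict, ← Subtype.val_inj, funext_iff]

instance [FiniteDimensional K M] (S : Set M) : Algebra.FiniteType K (coordinateRing K S) :=
  .of_surjective (((AlgHom.pi fun x : S => Pi.evalAlgHom K _ x.1).comp
    (regularFunctions K M).val).codRestrict (coordinateRing K S) fun f => ⟨f, f.2, rfl⟩) (by
      rintro ⟨_, f, hf, rfl⟩; exact ⟨⟨f, hf⟩, rfl⟩)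

lemma adjoin_range_restrict_linearMap (S : Set M) : Algebra.adjoin K
    (Set.range fun φ : M →ₗ[K] K => (isPolynomialMap_linearMap φ).restrict S) = ⊤ := by
  refine Subalgebra.map_injective (f := (coordinateRing K S).val) Subtype.val_injective ?_
  rw [AlgHom.map_adjoin, ← Set.range_comp, Algebra.map_top, Subalgebra.range_val]
  have hgen := AlgHom.map_adjoin (AlgHom.pi fun x : S => Pi.evalAlgHom K (fun _ : M => K) x.1)
    (Set.range fun φ : M →ₗ[K] K => (φ : M → K))
  rw [← Set.range_comp] at hgen
  exact hgen.symm

/-- The maximal ideal of the functions in the coordinate ring that vanish at `x`. -/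
def pointIdeal {S : Set M} (x : S) : PrimeSpectrum (coordinateRing K S) :=
  ⟨RingHom.ker ((Pi.evalAlgHom K _ x).comp (coordinateRing K S).val), RingHom.ker_isPrime _⟩

lemma restrict_mem_pointIdeal_iff {S : Set M} {x : S} {f : M → K} {hf : IsPolynomialMap K f} :
    hf.restrict S ∈ (pointIdeal x).asIdeal ↔ f x = 0 :=
  RingHom.mem_ker

variable [TopologicalSpace M] [IsZariski K M]

lemma isDomain_coordinateRing {S : Set M} (hS : IsIrreducible S) :
    IsDomain (coordinateRing K S) := by
  have := hS.nonempty.to_subtype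
  have : NoZeroDivisors (coordinateRing K S) := ⟨fun {g₁ g₂} hg => by
    obtain ⟨f₁, hf₁, rfl⟩ := exists_restrict_eq g₁
    obtain ⟨f₂, hf₂, rfl⟩ := exists_restrict_eq g₂
    simp only [restrict_eq_zero_iff]
    exact isPreirreducible_iff_isClosed_union_isClosed.1 hS.2 _ _ (isClosed_setOf_eq_zero hf₁)
      (isClosed_setOf_eq_zero hf₂)
      fun x hx => mul_eq_zero.1 (congrFun (congrArg Subtype.val hg) ⟨x, hx⟩)⟩
  exact NoZeroDivisors.to_isDomain _

lemma continuous_pointIdeal (S : Set M) : Continuous (pointIdeal (K := K) (S := S)) := by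
  refine continuous_iff_isClosed.2 fun Z hZ => ?_
  obtain ⟨G, rfl⟩ := (PrimeSpectrum.isClosed_iff_zeroLocus Z).1 hZ
  have hpreimage : pointIdeal ⁻¹' PrimeSpectrum.zeroLocus G = ⋂ g ∈ G, {x : S | g.1 x = 0} := by
    ext x
    simp only [Set.mem_preimage, PrimeSpectrum.mem_zeroLocus, Set.mem_iInter]
    rfl
  rw [hpreimage]
  refine isClosed_biInter fun g _ => ?_
  obtain ⟨f, hf, rfl⟩ := exists_restrict_eq g
  exact (isClosed_setOf_eq_zero hf).preimage continuous_subtype_val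

lemma isInducing_pointIdeal (S : Set M) : Topology.IsInducing (pointIdeal (K := K) (S := S)) := by
  refine ⟨TopologicalSpace.ext_iff_isClosed.2 fun C => ?_⟩
  refine ⟨fun hC => ?_, fun hC => ?_⟩
  · obtain ⟨Z, hZ, rfl⟩ := isClosed_induced_iff.1 hC
    obtain ⟨F, hF, rfl⟩ := (isClosed_iff_exists_isPolynomialMap K).1 hZ
    refine isClosed_induced_iff.2
      ⟨PrimeSpectrum.zeroLocus {g | ∃ (f : M → K) (hf : f ∈ F), (hF f hf).restrict S = g},
        PrimeSpectrum.isClosed_zeroLocus _, Set.ext fun x => ⟨fun hx f hf => ?_, ?_⟩⟩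
    · exact restrict_mem_pointIdeal_iff.1 (hx ⟨f, hf, rfl⟩)
    · rintro hx _ ⟨f, hf, rfl⟩
      exact restrict_mem_pointIdeal_iff.2 (hx f hf)
  · obtain ⟨Z, hZ, rfl⟩ := isClosed_induced_iff.1 hC
    exact hZ.preimage (continuous_pointIdeal S)

lemma exists_mem_forall_algHom_restrict_eq [FiniteDimensional K M] {S : Set M} (hS : IsClosed S)
    (ψ : coordinateRing K S →ₐ[K] K) :
    ∃ v ∈ S, ∀ (f : M → K) (hf : IsPolynomialMap K f), ψ (hf.restrict S) = f v := by
  let δ : (M →ₗ[K] K) →ₗ[K] K :=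
    { toFun := fun φ => ψ ((isPolynomialMap_linearMap φ).restrict S)
      map_add' := fun φ φ' => map_add ψ ((isPolynomialMap_linearMap φ).restrict S)
        ((isPolynomialMap_linearMap φ').restrict S)
      map_smul' := fun a φ => map_smul ψ a ((isPolynomialMap_linearMap φ).restrict S) }
  obtain ⟨v, hv⟩ := (Module.evalEquiv K M).surjective δ
  have hψ : ∀ (f : M → K) (hf : IsPolynomialMap K f), ψ (hf.restrict S) = f v := fun f hf => by
    induction isPolynomialMap_iff_mem.1 hf using Algebra.adjoin_induction with
    | mem f hmem =>
      obtain ⟨φ, rfl⟩ := hmem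
      exact (LinearMap.congr_fun hv φ).symm
    | algebraMap a => exact ψ.commutes a
    | add f g hfmem hgmem ihf ihg =>
      have hf := isPolynomialMap_iff_mem.2 hfmem
      have hg := isPolynomialMap_iff_mem.2 hgmem
      exact (map_add ψ (hf.restrict S) (hg.restrict S)).trans (congrArg₂ (· + ·) (ihf hf) (ihg hg))
    | mul f g hfmem hgmem ihf ihg =>
      have hf := isPolynomialMap_iff_mem.2 hfmem
      have hg := isPolynomialMap_iff_mem.2 hgmem
      exact (map_mul ψ (hf.restrict S) (hg.restrict S)).trans (congrArg₂ (· * ·) (ihf hf) (ihg hg))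
  refine ⟨v, ?_, hψ⟩
  by_contra hvS
  obtain ⟨f, hf, hfS, hfv⟩ := exists_isPolynomialMap_of_notMem_isClosed (K := K) hS hvS
  exact hfv (by rw [← hψ f hf, restrict_eq_zero_iff.2 hfS, map_zero])

lemma closedPoints_subset_range_pointIdeal [IsAlgClosed K] [FiniteDimensional K M] {S : Set M}
    (hS : IsClosed S) : closedPoints (PrimeSpectrum (coordinateRing K S)) ⊆
      Set.range (pointIdeal (K := K) (S := S)) := by
  intro m hm
  have : m.asIdeal.IsMaximal := (PrimeSpectrum.isClosed_singleton_iff_isMaximal m).1 hm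
  obtain ⟨ψ, hψ⟩ := exists_algHom_ker_eq_of_isMaximal K m.asIdeal
  obtain ⟨v, hvS, hv⟩ := exists_mem_forall_algHom_restrict_eq hS ψ
  refine ⟨⟨v, hvS⟩, PrimeSpectrum.ext (Ideal.ext fun g => ?_)⟩
  obtain ⟨f, hf, rfl⟩ := exists_restrict_eq g
  rw [restrict_mem_pointIdeal_iff, ← hψ, RingHom.mem_ker, ← hv f hf]

lemma dimSet_eq_ringKrullDim_coordinateRing_closure [IsAlgClosed K] [FiniteDimensional K M]
    (S : Set M) : dimSet S = ringKrullDim (coordinateRing K (closure S)) := by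
  have : IsJacobsonRing (coordinateRing K (closure S)) := isJacobsonRing_of_finiteType (A := K)
  rw [dimSet, ← PrimeSpectrum.topologicalKrullDim_eq_ringKrullDim]
  refine topologicalKrullDim_eq_of_isInducing (isInducing_pointIdeal (closure S)) fun Z hZ => ?_
  calc Z = closure (Z ∩ closedPoints _) := by
        rw [JacobsonSpace.closure_inter_closedPoints_eq_closure hZ.isLocallyClosed, hZ.closure_eq]
    _ ⊆ closure (Z ∩ Set.range pointIdeal) := closure_mono
        (Set.inter_subset_inter_right Z (closedPoints_subset_range_pointIdeal isClosed_closure))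

lemma exists_algIndepOn_dimSet_eq [IsAlgClosed K] [FiniteDimensional K M] {S : Set M}
    (hS : IsIrreducible S) :
    ∃ (n : ℕ) (φ : Fin n → M →ₗ[K] K), AlgIndepOn (fun i => φ i) S ∧ dimSet S = n := by
  have := isDomain_coordinateRing (K := K) hS.closure
  obtain ⟨n, φ, hφ, hn⟩ := exists_algebraicIndependent_comp_ringKrullDim_eq
    (adjoin_range_restrict_linearMap (K := K) (closure S))
  rw [dimSet_eq_ringKrullDim_coordinateRing_closure (K := K)]
  have hclosure : AlgIndepOn (fun i => φ i) (closure S) :=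
    hφ.map' (f := (coordinateRing K (closure S)).val) Subtype.val_injective
  exact ⟨n, φ, hclosure.of_subset_closure (fun i => isPolynomialMap_linearMap (φ i)) le_rfl, hn⟩

lemma AlgIndepOn.natCard_le_dimSet [IsAlgClosed K] [FiniteDimensional K M] {S : Set M}
    (hS : IsIrreducible S) {T : Type*} [Finite T] {f : T → M → K}
    (hf : ∀ t, IsPolynomialMap K (f t)) (h : AlgIndepOn f S) :
    (Nat.card T : WithBot ℕ∞) ≤ dimSet S := by
  have := isDomain_coordinateRing (K := K) hS.closure
  rw [dimSet_eq_ringKrullDim_coordinateRing_closure (K := K)]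
  refine natCard_le_ringKrullDim_of_algebraicIndependent (K := K)
    (z := fun t => (hf t).restrict (closure S)) ?_
  exact .of_comp (coordinateRing K (closure S)).val (h.mono subset_closure)

lemma dimSet_mono {X : Type*} [TopologicalSpace X] {s t : Set X} (h : s ⊆ t) :
    dimSet s ≤ dimSet t :=
  (Topology.IsEmbedding.inclusion (closure_mono h)).isInducing.topologicalKrullDim_le

end Dimension

section Forms

variable {K} {σ : Type*} [Finite σ] {d : ℕ}

/-- The exponents of the monomials of degree `d` in the variables `σ`. -/
abbrev Exponent (σ : Type*) (d : ℕ) : Type _ := {m : σ →₀ ℕ // m.degree = d}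

instance : Finite (Exponent σ d) :=
  ((Finsupp.finite_of_degree_le d).subset fun _ hm => le_of_eq hm).to_subtype

instance : Fintype (Exponent σ d) := Fintype.ofFinite _

instance : FiniteDimensional K (homogeneousSubmodule σ K d) :=
  .of_fg (homogeneousSubmodule_fg σ K d)

omit [Finite σ] in
lemma finrank_homogeneousSubmodule :
    Module.finrank K (homogeneousSubmodule σ K d) = Nat.card (Exponent σ d) := by
  have hsupp : homogeneousSubmodule σ K d = restrictSupport K {m | m.degree = d} :=
    homogeneousSubmodule_eq_finsupp_supported σ K d
  rw [hsupp, Module.finrank_eq_nat_card_basis (basisRestrictSupport K _)]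
  rfl

lemma coeff_sum_monomial_exponent (c : Exponent σ d → K) (m : Exponent σ d) :
    coeff m.1 (∑ n, monomial n.1 (c n)) = c m := by
  classical
  simp only [coeff_sum, coeff_monomial, Subtype.coe_inj, Finset.sum_ite_eq', Finset.mem_univ,
    if_true]

/-- The form with prescribed coefficients. -/
def formOfCoeffs (c : Exponent σ d → K) : homogeneousSubmodule σ K d :=
  ⟨∑ n, monomial n.1 (c n), sum_mem fun n _ => isHomogeneous_monomial _ n.2⟩

variable (K) in
omit [Finite σ] in
/-- The monomial with exponent `m`, as a form. -/
def monomialForm (m : Exponent σ d) : homogeneousSubmodule σ K d :=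
  ⟨monomial m.1 1, isHomogeneous_monomial _ m.2⟩

omit [Finite σ] in
lemma coe_monomialForm (m : Exponent σ d) :
    (monomialForm K m : MvPolynomial σ K) = monomial m.1 1 := rfl

lemma sum_monomial_coeff_of_isHomogeneous {G : MvPolynomial σ K} (hG : G.IsHomogeneous d) :
    ∑ m : Exponent σ d, monomial m.1 (coeff m.1 G) = G := by
  ext n
  by_cases hn : n.degree = d
  · exact coeff_sum_monomial_exponent (fun m => coeff m.1 G) ⟨n, hn⟩
  · have hsum := IsHomogeneous.sum Finset.univ (fun m : Exponent σ d => monomial m.1 (coeff m.1 G))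
      d fun m _ => isHomogeneous_monomial _ m.2
    rw [hsum.coeff_eq_zero hn, hG.coeff_eq_zero hn]

lemma eval_eq_sum_exponent {G : MvPolynomial σ K} (hG : G.IsHomogeneous d) (x : σ → K) :
    eval x G = ∑ m : Exponent σ d, coeff m.1 G * eval x (monomial m.1 1) := by
  conv_lhs => rw [← sum_monomial_coeff_of_isHomogeneous hG]
  simp only [map_sum, eval_monomial, one_mul]

section PolynomialMaps

variable {M N : Type*} [AddCommGroup M] [Module K M] [AddCommGroup N] [Module K N]

lemma IsPolynomialMap.of_separating [FiniteDimensional K N] {ι : Type*} (ψ : ι → Module.Dual K N)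
    (hψ : ∀ w, (∀ i, ψ i w = 0) → w = 0) {Φ : M → N}
    (hΦ : ∀ i, IsPolynomialMap K fun v => ψ i (Φ v)) : IsPolynomialMap K Φ := fun ℓ => by
  have hspan : Submodule.span K (Set.range ψ) = ⊤ := by
    have hcoann : (Submodule.span K (Set.range ψ)).dualCoannihilator = ⊥ :=
      eq_bot_iff.2 fun w hw => hψ w fun i =>
        (Submodule.mem_dualCoannihilator w).1 hw _ (Submodule.subset_span ⟨i, rfl⟩)
    rw [← Subspace.dualCoannihilator_dualAnnihilator_eq (W := Submodule.span K (Set.range ψ)),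
      hcoann, Submodule.dualAnnihilator_bot]
  have hℓ : ℓ ∈ Submodule.span K (Set.range ψ) := hspan ▸ Submodule.mem_top
  induction hℓ using Submodule.span_induction with
  | mem _ h => obtain ⟨i, rfl⟩ := h; exact isPolynomialMap_iff_mem.1 (hΦ i)
  | zero => exact zero_mem _
  | add ℓ₁ ℓ₂ _ _ h₁ h₂ => exact add_mem h₁ h₂
  | smul a ℓ _ h => exact Subalgebra.smul_mem _ h a

omit [Finite σ] in
lemma isPolynomialMap_coeff (m : σ →₀ ℕ) :
    IsPolynomialMap K fun F : homogeneousSubmodule σ K d => coeff m (F : MvPolynomial σ K) :=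
  isPolynomialMap_linearMap (lcoeff K m ∘ₗ (homogeneousSubmodule σ K d).subtype)

@[fun_prop]
lemma IsPolynomialMap.eval_form {x : M → σ → K} {F : M → homogeneousSubmodule σ K d}
    (hx : IsPolynomialMap K x) (hF : IsPolynomialMap K F) :
    IsPolynomialMap K fun v => eval (x v) (F v : MvPolynomial σ K) := by
  simp only [fun v => eval_eq_sum_exponent (F v).2 (x v)]
  have hcoeff (m : σ →₀ ℕ) := (isPolynomialMap_coeff m).comp hF
  fun_prop

lemma isPolynomialMap_of_eval [Infinite K] {F : M → homogeneousSubmodule σ K d}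
    (hF : ∀ x, IsPolynomialMap K fun v => eval x (F v : MvPolynomial σ K)) :
    IsPolynomialMap K F :=
  .of_separating
    (fun x => (aeval (R := K) x).toLinearMap ∘ₗ (homogeneousSubmodule σ K d).subtype)
    (fun _ hG => Subtype.ext <| funext fun x => by
      simpa only [map_zero, ← aeval_eq_eval] using! hG x)
    fun x => by simpa only [← aeval_eq_eval] using! hF x

end PolynomialMaps

variable (K) in
/-- The space of tuples of forms of the same degree `d` indexed by `J`. -/
abbrev FormTuple (σ J : Type*) (d : ℕ) : Type _ := J → homogeneousSubmodule σ K d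

lemma algIndepOn_coeff_univ [Infinite K] {J : Type*} : AlgIndepOn
    (fun (u : J × Exponent σ d) (F : FormTuple K σ J d) => coeff u.2.1 (F u.1 : MvPolynomial σ K))
    Set.univ :=
  AlgIndepOn.coordinates_univ.of_forall_exists_eq fun z _ =>
    ⟨fun j => formOfCoeffs fun m => z (j, m), trivial,
      fun _ => coeff_sum_monomial_exponent (fun m => z (_, m)) _⟩

end Forms

section Elimination

variable {K} {T : Type*} [Finite T] {A : Type*}

lemma exists_linearIndependent_comp_of_span_eq_top {V : Type*} [AddCommGroup V] [Module K V]
    {n I : Type*} [Finite n] (b : Module.Basis n K V) {w : I → V}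
    (hw : Submodule.span K (Set.range w) = ⊤) : ∃ B : n → I, LinearIndependent K (w ∘ B) := by
  obtain ⟨κ, a, -, hspan, hindep⟩ := exists_linearIndependent' K w
  have e := b.indexEquiv (Module.Basis.mk hindep (hspan.trans hw).ge)
  exact ⟨a ∘ e, hindep.comp e e.injective⟩

/-- A maximal square submatrix of the Macaulay matrix in degree `D` of the forms `g α` of degree
`e α`: the rows are the coefficient vectors of the multiples of the `g α` by monomials selected
by `B`. -/
def macaulayMinor {e : A → ℕ} {D : ℕ}
    (B : Exponent T D → {i : (T →₀ ℕ) × A // i.1.degree + e i.2 = D}) (g : A → MvPolynomial T K) :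
    Matrix (Exponent T D) (Exponent T D) K :=
  .of fun k m => coeff m.1 (monomial (B k).1.1 1 * g (B k).1.2)

lemma exists_forall_monomial_mem_span [IsAlgClosed K] {g : A → MvPolynomial T K}
    (hzero : ∀ p, (∀ α, eval p (g α) = 0) → p = 0) :
    ∃ D, ∀ m : Exponent T D, monomial m.1 1 ∈ Ideal.span (Set.range g) := by
  have hrad : idealOfVars T K ≤ (Ideal.span (Set.range g)).radical := by
    rw [← vanishingIdeal_zeroLocus_eq_radical (K := K), idealOfVars, Ideal.span_le]
    rintro _ ⟨t, rfl⟩ p hp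
    have hp0 : p = 0 := hzero p fun α => by
      simpa only [aeval_eq_eval] using! hp (g α) (Ideal.subset_span ⟨α, rfl⟩)
    simp only [hp0, aeval_X, Pi.zero_apply]
  obtain ⟨D, hD⟩ := Ideal.exists_pow_le_of_le_radical_of_fg hrad (idealOfVars_fg T K)
  refine ⟨D, fun m => hD ((mem_pow_idealOfVars_iff _ _).2 fun x hx => ?_)⟩
  rw [Finset.mem_singleton.1 (support_monomial_subset hx), m.2]

omit [Finite T] in
open Pointwise in
lemma mem_span_monomial_mul_of_isHomogeneous {g : A → MvPolynomial T K} {e : A → ℕ}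
    (hg : ∀ α, (g α).IsHomogeneous (e α)) {D : ℕ} {f : MvPolynomial T K} (hf : f.IsHomogeneous D)
    (hmem : f ∈ Ideal.span (Set.range g)) :
    f ∈ Submodule.span K (Set.range fun i : {i : (T →₀ ℕ) × A // i.1.degree + e i.2 = D} =>
      monomial i.1.1 1 * g i.1.2) := by
  have hmonomials : Submodule.span K (Set.range fun β : T →₀ ℕ => (monomial β 1 :
      MvPolynomial T K)) = ⊤ := by
    simpa only [coe_basisMonomials] using (basisMonomials T K).span_eq
  have hspan : f ∈ Submodule.span K
      (Set.range (fun β : T →₀ ℕ => (monomial β 1 : MvPolynomial T K)) • Set.range g) := by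
    rw [Submodule.span_smul_of_span_eq_top hmonomials]
    exact hmem
  rw [← homogeneousComponent_eq_self hf]
  rw [← Submodule.mem_comap]
  refine Submodule.span_le.2 ?_ hspan
  rintro _ ⟨_, ⟨β, rfl⟩, _, ⟨α, rfl⟩, rfl⟩
  have hprod := (isHomogeneous_monomial (1 : K) (rfl : β.degree = β.degree)).mul (hg α)
  rw [SetLike.mem_coe, Submodule.mem_comap]
  beta_reduce
  rw [homogeneousComponent_of_mem hprod]
  split_ifs with h
  · exact Submodule.subset_span ⟨⟨(β, α), h.symm⟩, rfl⟩
  · exact zero_mem _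

lemma exists_det_macaulayMinor_ne_zero [IsAlgClosed K] [DecidableEq T]
    {g : A → MvPolynomial T K} {e : A → ℕ} (hg : ∀ α, (g α).IsHomogeneous (e α))
    (hzero : ∀ p, (∀ α, eval p (g α) = 0) → p = 0) :
    ∃ (D : ℕ) (B : Exponent T D → {i : (T →₀ ℕ) × A // i.1.degree + e i.2 = D}),
      (macaulayMinor B g).det ≠ 0 := by
  obtain ⟨D, hD⟩ := exists_forall_monomial_mem_span hzero
  let coeffs : MvPolynomial T K →ₗ[K] Exponent T D → K := LinearMap.pi fun m => lcoeff K m.1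
  have hspan : Submodule.span K (Set.range fun i : {i : (T →₀ ℕ) × A // i.1.degree + e i.2 = D} =>
      coeffs (monomial i.1.1 1 * g i.1.2)) = ⊤ := by
    rw [Set.range_comp' coeffs, Submodule.span_image, ← top_le_iff,
      ← (Pi.basisFun K (Exponent T D)).span_eq, Submodule.span_le]
    rintro _ ⟨m, rfl⟩
    refine ⟨monomial m.1 1, mem_span_monomial_mul_of_isHomogeneous hg
      (isHomogeneous_monomial 1 m.2) (hD m), _root_.funext fun n => ?_⟩
    simp only [coeffs, LinearMap.pi_apply, lcoeff_apply, coeff_monomial, Pi.basisFun_apply,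
      Pi.single_apply, Subtype.coe_inj, eq_comm]
  obtain ⟨B, hB⟩ := exists_linearIndependent_comp_of_span_eq_top (Pi.basisFun K _) hspan
  have hunit : IsUnit (macaulayMinor B g) := Matrix.linearIndependent_rows_iff_isUnit.1 hB
  exact ⟨D, B, ((Matrix.isUnit_iff_isUnit_det _).1 hunit).ne_zero⟩

lemma eq_zero_of_det_macaulayMinor_ne_zero [DecidableEq T] {g : A → MvPolynomial T K} {e : A → ℕ}
    (hg : ∀ α, (g α).IsHomogeneous (e α)) {D : ℕ}
    {B : Exponent T D → {i : (T →₀ ℕ) × A // i.1.degree + e i.2 = D}}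
    (hB : (macaulayMinor B g).det ≠ 0) {p : T → K} (hp : ∀ α, eval p (g α) = 0) : p = 0 := by
  have hker := Matrix.eq_zero_of_mulVec_eq_zero hB (v := fun m => eval p (monomial m.1 1)) <|
    _root_.funext fun k => by
      have hprod := (isHomogeneous_monomial (1 : K) (d := (B k).1.1) rfl).mul (hg (B k).1.2)
      rw [(B k).2] at hprod
      refine (eval_eq_sum_exponent hprod p).symm.trans ?_
      rw [map_mul, hp, mul_zero, Pi.zero_apply]
  ext t
  have hpow : eval p (monomial (Finsupp.single t D) 1) = 0 :=
    congrFun hker ⟨Finsupp.single t D, Finsupp.degree_single t D⟩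
  rw [← X_pow_eq_monomial, map_pow, eval_X] at hpow
  exact eq_zero_of_pow_eq_zero hpow

/-- By the Nullstellensatz, there is no common zero iff in some degree some maximal minor of the
Macaulay matrix is nonzero. -/
lemma isClosed_setOf_exists_ne_zero_forall_eval_eq_zero [IsAlgClosed K] {M : Type*}
    [AddCommGroup M] [Module K M] [TopologicalSpace M] [IsZariski K M]
    {g : A → M → MvPolynomial T K} {e : A → ℕ} (hg : ∀ α v, (g α v).IsHomogeneous (e α))
    (hcoeff : ∀ α m, IsPolynomialMap K fun v => coeff m (g α v)) :
    IsClosed {v : M | ∃ p ≠ 0, ∀ α, eval p (g α v) = 0} := by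
  classical
  have hminors : {v : M | ∃ p ≠ 0, ∀ α, eval p (g α v) = 0} =
      ⋂ (D : ℕ) (B : Exponent T D → {i : (T →₀ ℕ) × A // i.1.degree + e i.2 = D}),
        {v | (macaulayMinor B (g · v)).det = 0} := by
    ext v
    simp only [Set.mem_ofPred_eq, Set.mem_iInter]
    refine ⟨fun ⟨p, hp, hpv⟩ D B => by_contra fun hB => hp <|
      eq_zero_of_det_macaulayMinor_ne_zero (hg · v) hB hpv, fun hv => ?_⟩
    by_contra! hzero
    obtain ⟨D, B, hB⟩ := exists_det_macaulayMinor_ne_zero (hg · v) fun p hp => by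
      by_contra hp0
      obtain ⟨α, hα⟩ := hzero p hp0
      exact hα (hp α)
    exact hB (hv D B)
  rw [hminors]
  refine isClosed_iInter fun D => isClosed_iInter fun B => isClosed_setOf_eq_zero (.det ?_)
  intro k m
  simp only [macaulayMinor, Matrix.of_apply, coeff_monomial_mul']
  split_ifs
  · have := hcoeff (B k).1.2 (m.1 - (B k).1.1)
    fun_prop
  · fun_prop

end Elimination

section Pullback

open scoped Matrix

variable {K} {σ τ υ : Type*} [Fintype τ] {d : ℕ}

/-- Pulling back forms along the linear map with matrix `A`. -/
def pullback (A : Matrix σ τ K) : homogeneousSubmodule σ K d →ₗ[K] homogeneousSubmodule τ K d :=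
  (bind₁ A.toMvPolynomial).toLinearMap.restrict fun G hG => by
    simpa only [one_mul] using! IsHomogeneous.aeval hG _ A.toMvPolynomial_isHomogeneous

lemma coe_pullback (A : Matrix σ τ K) (G : homogeneousSubmodule σ K d) :
    (pullback A G : MvPolynomial τ K) = bind₁ A.toMvPolynomial G := rfl

lemma eval_pullback (A : Matrix σ τ K) (G : homogeneousSubmodule σ K d) (x : τ → K) :
    eval x (pullback A G : MvPolynomial τ K) = eval (A *ᵥ x) (G : MvPolynomial σ K) := by
  rw [coe_pullback, ← aeval_eq_eval, aeval_bind₁]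
  simp only [aeval_eq_eval, Matrix.toMvPolynomial_eval_eq_apply]

lemma pullback_eq_zero_iff [Infinite K] {A : Matrix σ τ K} {G : homogeneousSubmodule σ K d} :
    pullback A G = 0 ↔ ∀ x, eval (A *ᵥ x) (G : MvPolynomial σ K) = 0 := by
  simp only [← eval_pullback, Subtype.ext_iff, MvPolynomial.funext_iff, ZeroMemClass.coe_zero,
    map_zero]

lemma pullback_pullback [Fintype υ] (A : Matrix σ τ K) (B : Matrix τ υ K)
    (G : homogeneousSubmodule σ K d) : pullback B (pullback A G) = pullback (A * B) G :=
  Subtype.ext <| by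
    simp only [coe_pullback, bind₁_bind₁, ← Matrix.toMvPolynomial_mul]

lemma pullback_one [DecidableEq τ] (G : homogeneousSubmodule τ K d) : pullback 1 G = G :=
  Subtype.ext <| by
    simp only [coe_pullback, Matrix.toMvPolynomial_one, bind₁_X_left, AlgHom.id_apply]

lemma bind₁_toMvPolynomial_surjective [Fintype σ] [DecidableEq τ] {A : Matrix σ τ K}
    {B : Matrix τ σ K} (hBA : B * A = 1) : Function.Surjective (bind₁ A.toMvPolynomial) := fun p =>
  ⟨bind₁ B.toMvPolynomial p, by
    simp only [bind₁_bind₁, ← Matrix.toMvPolynomial_mul, hBA, Matrix.toMvPolynomial_one,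
      bind₁_X_left, AlgHom.id_apply]⟩

omit [Fintype τ] in
lemma exists_isUnit_mul_eq_of_linearIndependent_col [Finite τ] [Fintype σ] [DecidableEq σ]
    {A B : Matrix σ τ K} (hA : LinearIndependent K A.col) (hB : LinearIndependent K B.col) :
    ∃ E : Matrix σ σ K, IsUnit E ∧ E * A = B := by
  have := Fintype.ofFinite τ
  rw [← Matrix.mulVec_injective_iff] at hA hB
  let eA := LinearEquiv.ofInjective A.mulVecLin hA
  let eB := LinearEquiv.ofInjective B.mulVecLin hB
  obtain ⟨g, hg⟩ := Submodule.exists_linearEquiv_restrict_eq (eA.symm ≪≫ₗ eB)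
  refine ⟨g.toLinearMap.toMatrix', LinearMap.isUnit_toMatrix'_iff.2 ?_,
    Matrix.mulVec_injective <| _root_.funext fun x => ?_⟩
  · exact (Module.End.isUnit_iff _).2 g.bijective
  · have hgx := hg (eA x)
    rw [LinearEquiv.trans_apply, eA.symm_apply_apply] at hgx
    rw [← Matrix.mulVec_mulVec, LinearMap.toMatrix'_mulVec]
    exact hgx.symm

end Pullback

section Lines

open scoped Matrix

/-- The locus of tuples of forms vanishing on a common line. -/
def lineLocus (σ J : Type*) (d : ℕ) : Set (FormTuple K σ J d) :=
  {F | ∃ v w : σ → K, LinearIndependent K ![v, w] ∧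
    ∀ i, ∀ s t : K, eval (s • v + t • w) (F i : MvPolynomial σ K) = 0}

variable {K} {σ J : Type*} {d : ℕ} {F : FormTuple K σ J d}

lemma mem_lineLocus_iff_exists_matrix [Infinite K] : F ∈ lineLocus K σ J d ↔
    ∃ A : Matrix σ (Fin 2) K, LinearIndependent K A.col ∧ ∀ i, pullback A (F i) = 0 := by
  simp only [pullback_eq_zero_iff]
  have hcombination (A : Matrix σ (Fin 2) K) (x : Fin 2 → K) :
      A *ᵥ x = x 0 • A.col 0 + x 1 • A.col 1 := by
    ext j
    simp only [Matrix.mulVec, dotProduct, Fin.sum_univ_two, Pi.add_apply, Pi.smul_apply,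
      Matrix.col_apply, smul_eq_mul, mul_comm]
  constructor
  · rintro ⟨v, w, hvw, hF⟩
    exact ⟨(Matrix.of ![v, w])ᵀ, hvw, fun i x => (hcombination _ x).symm ▸ hF i _ _⟩
  · rintro ⟨A, hA, hF⟩
    have hcol : ![A.col 0, A.col 1] = A.col := List.ofFn_inj.1 rfl
    exact ⟨A.col 0, A.col 1, hcol ▸ hA, fun i s t => hcombination A ![s, t] ▸ hF i ![s, t]⟩

lemma mem_lineLocus_of_forall_mem_range [Fintype σ] {P : Matrix σ σ K} {a b : σ}
    (haa : P a a = 0) (hbb : P b b = 0) (hab : P a b ≠ 0) (hba : P b a ≠ 0)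
    (hF : ∀ i x, eval (P *ᵥ x) (F i : MvPolynomial σ K) = 0) : F ∈ lineLocus K σ J d := by
  classical
  refine ⟨P.col a, P.col b, LinearIndependent.pair_iff.2 fun s t hst => ?_, fun i s t => ?_⟩
  · have ha := congrFun hst a
    have hb := congrFun hst b
    simp only [Pi.add_apply, Pi.smul_apply, Matrix.col_apply, smul_eq_mul, haa, hbb, mul_zero,
      zero_add, add_zero, Pi.zero_apply, mul_eq_zero, hab, hba, or_false] at ha hb
    exact ⟨hb, ha⟩
  · rw [← hF i (s • Pi.single a 1 + t • Pi.single b 1), Matrix.mulVec_add, Matrix.mulVec_smul,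
      Matrix.mulVec_smul, Matrix.mulVec_single_one, Matrix.mulVec_single_one]

/-- The matrix `P = v wᵀ - w vᵀ` of Plücker coordinates of the line through `v` and `w` has this
line as its image. -/
lemma mem_lineLocus_iff_exists_alternating [Fintype σ] : F ∈ lineLocus K σ J d ↔
    ∃ P : Matrix σ σ K, P ≠ 0 ∧ (∀ a, P a a = 0) ∧ (∀ a b, P a b + P b a = 0) ∧
      ∀ i x, eval (P *ᵥ x) (F i : MvPolynomial σ K) = 0 := by
  constructor
  · rintro ⟨v, w, hvw, hF⟩
    refine ⟨.vecMulVec v w - .vecMulVec w v, fun hP => hvw.ne_zero 1 ?_, fun a => ?_, fun a b => ?_,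
      fun i x => ?_⟩
    · ext b
      refine (LinearIndependent.pair_iff.1 hvw (w b) (-v b) (_root_.funext fun a => ?_)).1
      have hab := congrFun₂ hP a b
      simp only [Matrix.sub_apply, Matrix.vecMulVec_apply, Matrix.zero_apply] at hab
      simp only [Pi.add_apply, Pi.smul_apply, smul_eq_mul, Pi.zero_apply]
      linear_combination hab
    · rw [Matrix.sub_apply, Matrix.vecMulVec_apply, Matrix.vecMulVec_apply, mul_comm, sub_self]
    · simp only [Matrix.sub_apply, Matrix.vecMulVec_apply]
      ring
    · simp only [Matrix.sub_mulVec, Matrix.vecMulVec_mulVec, op_smul_eq_smul]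
      rw [sub_eq_add_neg, ← neg_smul, hF]
  · rintro ⟨P, hP, hdiag, halt, hF⟩
    obtain ⟨a, b, hab⟩ : ∃ a b, P a b ≠ 0 := by
      by_contra! h
      exact hP (Matrix.ext h)
    exact mem_lineLocus_of_forall_mem_range (hdiag a) (hdiag b) hab
      (fun hba => hab (by simpa only [hba, add_zero] using halt a b)) hF

lemma isClosed_lineLocus [IsAlgClosed K] [Finite σ] [Finite J]
    [TopologicalSpace (FormTuple K σ J d)] [IsZariski K (FormTuple K σ J d)] :
    IsClosed (lineLocus K σ J d) := by
  have := Fintype.ofFinite σ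
  let generic (x : σ → K) (a : σ) : MvPolynomial (σ × σ) K := ∑ b, x b • X (a, b)
  have hgeneric (x : σ → K) (a : σ) : (generic x a).IsHomogeneous 1 :=
    .sum _ _ _ fun b _ => (homogeneousSubmodule (σ × σ) K 1).smul_mem _ (isHomogeneous_X K _)
  have heval (P : Matrix σ σ K) (x : σ → K) (G : MvPolynomial σ K) :
      eval (fun c => P c.1 c.2) (aeval (generic x) G) = eval (P *ᵥ x) G := by
    rw [← aeval_eq_eval, comp_aeval_apply]
    simp only [generic, map_sum, map_smul, aeval_X, smul_eq_mul, mul_comm]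
    rfl
  let degrees : σ ⊕ (σ × σ) ⊕ (J × (σ → K)) → ℕ := Sum.elim 1 (Sum.elim 1 fun _ => d)
  let conditions : σ ⊕ (σ × σ) ⊕ (J × (σ → K)) → FormTuple K σ J d → MvPolynomial (σ × σ) K :=
    Sum.elim (fun a _ => X (a, a)) (Sum.elim (fun c _ => X c + X c.swap)
      fun c F => aeval (generic c.2) (F c.1 : MvPolynomial σ K))
  have hlocus : lineLocus K σ J d = {F | ∃ p ≠ 0, ∀ α, eval p (conditions α F) = 0} := by
    ext F
    rw [mem_lineLocus_iff_exists_alternating]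
    refine (Equiv.curry σ σ K).symm.exists_congr fun P => and_congr ?_ ?_
    · exact ((Equiv.curry σ σ K).symm.injective.ne_iff' rfl).symm
    · simp only [Sum.forall, conditions, Sum.elim_inl, Sum.elim_inr, Prod.forall, map_add, eval_X]
      exact and_congr_right' (and_congr_right' (forall₂_congr fun i x =>
        (congrArg (· = 0) (heval P x (F i)).symm).to_iff))
  rw [hlocus]
  refine isClosed_setOf_exists_ne_zero_forall_eval_eq_zero (e := degrees) ?_ ?_
  · rintro (a | c | c) F
    · exact isHomogeneous_X K _
    · exact (isHomogeneous_X K _).add (isHomogeneous_X K _)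
    · simpa only [one_mul] using! IsHomogeneous.aeval (F c.1).2 _ (hgeneric c.2)
  · rintro (a | c | c) m
    · exact .const _
    · exact .const _
    · let conditionCoeff : FormTuple K σ J d →ₗ[K] K := lcoeff K m ∘ₗ
        (aeval (R := K) (generic c.2)).toLinearMap ∘ₗ
        (homogeneousSubmodule σ K d).subtype ∘ₗ LinearMap.proj c.1
      exact isPolynomialMap_linearMap conditionCoeff

lemma lineLocus_eq_image [Infinite K] [Fintype σ] [DecidableEq σ] {A : Matrix σ (Fin 2) K}
    (hA : LinearIndependent K A.col) : lineLocus K σ J d =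
      (fun (p : (σ → σ → K) × (J → LinearMap.ker (pullback (d := d) A))) i =>
        pullback (.of p.1) (p.2 i : homogeneousSubmodule σ K d)) ''
        {p | (Matrix.of p.1).det ≠ 0} := by
  ext F
  simp only [mem_lineLocus_iff_exists_matrix, ← isUnit_iff_ne_zero,
    ← Matrix.isUnit_iff_isUnit_det]
  constructor
  · rintro ⟨B, hB, hF⟩
    obtain ⟨E, ⟨E, rfl⟩, rfl⟩ := exists_isUnit_mul_eq_of_linearIndependent_col hA hB
    have hker (i : J) : pullback E.1 (F i) ∈ LinearMap.ker (pullback A) := by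
      rw [LinearMap.mem_ker, pullback_pullback, hF]
    refine ⟨(E⁻¹.1, fun i => ⟨_, hker i⟩), E⁻¹.isUnit, _root_.funext fun i => ?_⟩
    exact (pullback_pullback _ _ _).trans (E.mul_inv ▸ pullback_one _)
  · rintro ⟨⟨D, G⟩, ⟨D, rfl⟩, rfl⟩
    refine ⟨D⁻¹.1 * A, ?_, fun i => ?_⟩
    · rw [← Matrix.mulVec_injective_iff] at hA ⊢
      simp only [Function.Injective, ← Matrix.mulVec_mulVec]
      exact fun x y hxy => hA (Matrix.mulVec_injective_of_isUnit D⁻¹.isUnit hxy)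
    · have hcancel : D.1 * (D⁻¹.1 * A) = A := by
        rw [← Matrix.mul_assoc, D.mul_inv, Matrix.one_mul]
      exact (pullback_pullback D.1 _ _).trans
        ((congrArg (pullback · (G i).1) hcancel).trans (LinearMap.mem_ker.1 (G i).2))

lemma isIrreducible_lineLocus [Infinite K] [Nontrivial σ] [Finite σ] [Finite J]
    [TopologicalSpace (FormTuple K σ J d)] [IsZariski K (FormTuple K σ J d)] :
    IsIrreducible (lineLocus K σ J d) := by
  classical
  have := Fintype.ofFinite σ
  obtain ⟨a, b, hab⟩ := exists_pair_ne σ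
  let A : Matrix σ (Fin 2) K := (Matrix.of ![Pi.single a 1, Pi.single b 1])ᵀ
  have hA : LinearIndependent K A.col := by
    have hpair := (Pi.linearIndependent_single_one σ K).comp ![a, b] (by
      intro i j
      fin_cases i <;> fin_cases j <;> simp [hab, hab.symm])
    convert hpair using 1
    ext i : 1
    fin_cases i <;> rfl
  rw [lineLocus_eq_image hA]
  refine IsPolynomialMap.isIrreducible_image
    (.pi fun i => isPolynomialMap_of_eval fun x => ?_) ?_ ⟨((1 : Matrix σ σ K), 0), ?_⟩
  · have hform := isPolynomialMap_linearMap (M := LinearMap.ker (pullback A))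
      (N := homogeneousSubmodule σ K d) (LinearMap.ker (pullback A)).subtype
    simp only [eval_pullback]
    refine .eval_form (.pi fun j => ?_) (hform.comp (by fun_prop))
    simp only [Matrix.mulVec, dotProduct, Matrix.of_apply]
    fun_prop
  · refine .det fun i j => ?_
    simp only [Matrix.of_apply]
    fun_prop
  · exact (Matrix.det_one (n := σ) (R := K)).trans_ne one_ne_zero

lemma two_le_ringKrullDim_of_mem_lineLocus [Infinite K] [Finite σ] (hF : F ∈ lineLocus K σ J d) :
    2 ≤ ringKrullDim (MvPolynomial σ K ⧸
      Ideal.span (Set.range fun i => (F i : MvPolynomial σ K))) := by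
  classical
  have := Fintype.ofFinite σ
  obtain ⟨A, hA, hF⟩ := mem_lineLocus_iff_exists_matrix.1 hF
  obtain ⟨B, hBA⟩ : ∃ B : Matrix (Fin 2) σ K, B * A = 1 := by
    rw [← Matrix.mulVec_injective_iff] at hA
    obtain ⟨g, hg⟩ := A.mulVecLin.exists_leftInverse_of_injective (LinearMap.ker_eq_bot.2 hA)
    refine ⟨g.toMatrix', Matrix.mulVec_injective <| _root_.funext fun x => ?_⟩
    rw [← Matrix.mulVec_mulVec, LinearMap.toMatrix'_mulVec, Matrix.one_mulVec]
    exact DFunLike.congr_fun hg x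
  have hkill : ∀ G ∈ Ideal.span (Set.range fun i => (F i : MvPolynomial σ K)),
      bind₁ A.toMvPolynomial G = 0 := by
    change _ ≤ RingHom.ker (bind₁ A.toMvPolynomial)
    rw [Ideal.span_le]
    rintro _ ⟨i, rfl⟩
    exact congrArg Subtype.val (hF i)
  refine le_trans ?_ (ringKrullDim_le_of_surjective (Ideal.Quotient.lift _ _ hkill)
    (Ideal.Quotient.lift_surjective_of_surjective _ _ (bind₁_toMvPolynomial_surjective hBA)))
  rw [MvPolynomial.ringKrullDim_of_isNoetherianRing, ringKrullDim_eq_zero_of_field]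
  simp

end Lines

section Specialization

variable {K} {T U β P : Type*} [AddCommGroup P] [Module K P]

/-- The coefficient of the lowest power of the parameter in `G` is an algebraic relation between
the specializations of `H` at `0`. -/
lemma AlgIndepOn.eq_zero_of_eval₂_eq_zero {H : T → β → Polynomial K}
    (hH : AlgIndepOn (fun t y => (H t y).eval 0) Set.univ) {G : Polynomial (MvPolynomial T K)}
    (hG : ∀ y, G.eval₂ (aeval (R := K) (H · y)).toRingHom Polynomial.X = 0) : G = 0 := by
  by_contra hG0
  obtain ⟨Q, hGQ, hQ⟩ := Polynomial.exists_eq_pow_rootMultiplicity_mul_and_not_dvd G hG0 0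
  rw [Polynomial.C_0, sub_zero] at hGQ hQ
  refine hQ (Polynomial.X_dvd_iff.2 (algIndepOn_iff.1 hH _ fun y _ => ?_))
  have hQy : Q.eval₂ (aeval (R := K) (H · y)).toRingHom Polynomial.X = 0 := by
    have hy := hG y
    rw [hGQ, Polynomial.eval₂_mul, Polynomial.eval₂_X_pow] at hy
    exact (mul_eq_zero.1 hy).resolve_left (pow_ne_zero _ Polynomial.X_ne_zero)
  have hQy0 := congrArg (Polynomial.aeval (R := K) (0 : K)).toRingHom hQy
  rw [Polynomial.hom_eval₂] at hQy0
  simpa [← aeval_eq_eval, comp_aeval_apply, ← Polynomial.coe_aeval_eq_eval] using hQy0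

lemma eval₂_aeval_sumElim (H : T → Polynomial K) (F : U → Polynomial K)
    (p : MvPolynomial (T ⊕ U) K) :
    Polynomial.eval₂ (aeval (R := K) H).toRingHom Polynomial.X
      (aeval (R := K) (Sum.elim (fun t => Polynomial.C (X t)) fun u => (F u).map C) p) =
    aeval (Sum.elim H F) p := by
  induction p using MvPolynomial.induction_on with
  | C a => simp [Polynomial.algebraMap_apply, algebraMap_eq]
  | add p q hp hq => simp only [map_add, Polynomial.eval₂_add, hp, hq]
  | mul_X p i hp =>
    rw [map_mul, map_mul, Polynomial.eval₂_mul, hp, aeval_X, aeval_X]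
    congr 1
    cases i with
    | inl t => simp
    | inr u =>
      have hC : (aeval (R := K) H).toRingHom.comp C = Polynomial.C := by
        ext a
        simp
      rw [Sum.elim_inr, Sum.elim_inr, Polynomial.eval₂_map, hC, Polynomial.eval₂_C_X]

lemma AlgIndepOn.sumElim_of_specialization [Infinite K] {f : U → P → K}
    (hf : ∀ u, IsPolynomialMap K (f u)) (hfindep : AlgIndepOn f Set.univ) {g : T → P × β → K}
    (hg : ∀ t y, IsPolynomialMap K fun q => g t (q, y)) {q₀ : P}
    (hgindep : AlgIndepOn (fun t y => g t (q₀, y)) Set.univ) :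
    AlgIndepOn (Sum.elim g fun u z => f u z.1) Set.univ := by
  refine algIndepOn_iff.2 fun p hp => ?_
  suffices hvanish : ∀ q (z : T → K), eval (Sum.elim z (f · q)) p = 0 from
    algIndepOn_iff.1 (hfindep.sumElim (E := fun _ => Set.univ) fun _ _ => coordinates_univ) p
      fun w _ => (congrArg (eval · p) (_root_.funext (Sum.rec (fun _ => rfl) fun _ => rfl))).trans
        (hvanish w.1 w.2)
  intro q z
  have hline : IsPolynomialMap K fun s : K => q₀ + s • (q - q₀) := by fun_prop
  choose F hF using fun u => ((hf u).comp hline).exists_polynomial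
  choose H hH using fun t y => ((hg t y).comp hline).exists_polynomial
  have hzero := eq_zero_of_eval₂_eq_zero (H := H)
    (by simpa only [← hH, zero_smul, add_zero] using hgindep) fun y => by
    rw [eval₂_aeval_sumElim (H · y) F p]
    refine Polynomial.funext fun s => ?_
    rw [Polynomial.eval_zero, ← hp (q₀ + s • (q - q₀), y) trivial,
      ← Polynomial.coe_aeval_eq_eval, comp_aeval_apply, aeval_eq_eval]
    refine congrArg (eval · p) (_root_.funext (Sum.rec (fun t => ?_) fun u => ?_))
    · exact (hH t y s).symm
    · exact (hF u s).symm
  let specialize : Polynomial (MvPolynomial T K) →ₐ[K] K :=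
    (aeval z).comp ((Polynomial.aeval (1 : MvPolynomial T K)).restrictScalars K)
  have hspecialize := congrArg specialize hzero
  rw [comp_aeval_apply, map_zero, aeval_eq_eval] at hspecialize
  rw [← hspecialize]
  refine congrArg (eval · p) (_root_.funext (Sum.rec (fun t => ?_) fun u => ?_))
  · simp [specialize]
  · have hFu := hF u 1
    rw [one_smul, add_sub_cancel] at hFu
    simp [specialize, hFu]

end Specialization

section LineLocusDimension

open scoped Matrix

variable {K} {σ κ J : Type*} (e : Fin 2 ⊕ κ ≃ σ) {d : ℕ}

/-- The exponents of degree `d` whose monomials vanish on the coordinate line spanned by the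
coordinates `e (inl 0)` and `e (inl 1)`. -/
abbrev OffLineExponent (d : ℕ) : Type _ := {m : Exponent σ d // ∃ c, m.1 (e (.inr c)) ≠ 0}

lemma natCard_exponent_le_natCard_offLineExponent_add [Finite σ] [Finite κ] :
    Nat.card (Exponent σ d) ≤ Nat.card (OffLineExponent e d) + (d + 1) := by
  classical
  have := Fintype.ofFinite κ
  have := Fintype.ofFinite σ
  rw [← Nat.card_congr (Equiv.sumCompl fun m : Exponent σ d => ∃ c, m.1 (e (.inr c)) ≠ 0),
    Nat.card_sum, ← Nat.card_fin (d + 1)]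
  gcongr
  have hdegree (m : Exponent σ d) (hm : ¬ ∃ c, m.1 (e (.inr c)) ≠ 0) :
      m.1 (e (.inl 0)) + m.1 (e (.inl 1)) = d := by
    simp only [not_exists, not_not] at hm
    have hsum := m.2
    rw [Finsupp.degree_eq_sum, ← e.sum_comp, Fintype.sum_sum_type, Fin.sum_univ_two] at hsum
    simpa only [hm, Finset.sum_const_zero, add_zero] using hsum
  refine Nat.card_le_card_of_injective (β := Fin (d + 1))
    (fun m => ⟨m.1.1 (e (.inl 0)), Nat.lt_succ_of_le
      ((Nat.le_add_right _ _).trans_eq (hdegree m.1 m.2))⟩) fun m n hmn => ?_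
  have hzero : m.1.1 (e (.inl 0)) = n.1.1 (e (.inl 0)) := congrArg Fin.val hmn
  ext j
  obtain ⟨i | c, rfl⟩ := e.surjective j
  · have hm := hdegree m.1 m.2
    have hn := hdegree n.1 n.2
    fin_cases i
    · exact hzero
    · exact Nat.add_left_cancel (hm.trans (hzero ▸ hn.symm))
  · exact (not_not.1 (not_exists.1 m.2 c)).trans (not_not.1 (not_exists.1 n.2 c)).symm

/-- The parametrization of the line `x_{e (inr c)} = y c 0 * x_{e (inl 0)} + y c 1 * x_{e (inl 1)}`
by its coordinates `e (inl 0)` and `e (inl 1)`. -/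
def graphMatrix (y : κ → Fin 2 → K) : Matrix σ (Fin 2) K :=
  (Matrix.fromRows 1 (.of y)).submatrix e.symm id

lemma toMvPolynomial_graphMatrix_inl (y : κ → Fin 2 → K) (i : Fin 2) :
    (graphMatrix e y).toMvPolynomial (e (.inl i)) = X i := by
  simp only [graphMatrix, ← Matrix.toMvPolynomial_one (R := K) (n := Fin 2),
    Matrix.toMvPolynomial, Matrix.submatrix_apply, e.symm_apply_apply, Matrix.fromRows_apply_inl,
    id_eq]

lemma toMvPolynomial_graphMatrix_inr (y : κ → Fin 2 → K) (c : κ) :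
    (graphMatrix e y).toMvPolynomial (e (.inr c)) = ∑ i, monomial (Finsupp.single i 1) (y c i) := by
  simp only [graphMatrix, Matrix.toMvPolynomial, Matrix.submatrix_apply, e.symm_apply_apply,
    Matrix.fromRows_apply_inr, id_eq, Matrix.of_apply]

lemma linearIndependent_col_graphMatrix (y : κ → Fin 2 → K) :
    LinearIndependent K (graphMatrix e y).col := by
  rw [← Matrix.mulVec_injective_iff]
  intro x x' hxx'
  ext i
  have hi := congrFun hxx' (e (.inl i))
  simpa only [← Matrix.toMvPolynomial_eval_eq_apply, toMvPolynomial_graphMatrix_inl, eval_X]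
    using hi

/-- The form `Q` corrected by a form in the coordinates `e (inl 0)` and `e (inl 1)` so as to vanish
on the line `graphMatrix e y`. -/
def vanishingForm (y : κ → Fin 2 → K) :
    homogeneousSubmodule σ K d →ₗ[K] homogeneousSubmodule σ K d :=
  LinearMap.id - (rename (e ∘ .inl)).toLinearMap.restrict
    (fun _ hG => IsHomogeneous.rename_isHomogeneous hG) ∘ₗ pullback (graphMatrix e y)

lemma coe_vanishingForm (y : κ → Fin 2 → K) (Q : homogeneousSubmodule σ K d) :
    (vanishingForm e y Q : MvPolynomial σ K) =
      Q - rename (e ∘ .inl) (pullback (graphMatrix e y) Q : MvPolynomial (Fin 2) K) := rfl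

lemma pullback_vanishingForm (y : κ → Fin 2 → K) (Q : homogeneousSubmodule σ K d) :
    pullback (graphMatrix e y) (vanishingForm e y Q) = 0 := by
  have hX : (graphMatrix e y).toMvPolynomial ∘ e ∘ Sum.inl = X :=
    _root_.funext (toMvPolynomial_graphMatrix_inl e y)
  refine Subtype.ext ?_
  rw [coe_pullback, coe_vanishingForm, map_sub, bind₁_rename, hX, bind₁_X_left, AlgHom.id_apply,
    coe_pullback, sub_self, ZeroMemClass.coe_zero]

lemma coeff_vanishingForm_of_offLine (y : κ → Fin 2 → K) (Q : homogeneousSubmodule σ K d)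
    (m : OffLineExponent e d) : coeff m.1.1 (vanishingForm e y Q : MvPolynomial σ K) =
      coeff m.1.1 (Q : MvPolynomial σ K) := by
  obtain ⟨m, c, hc⟩ := m
  rw [coe_vanishingForm, coeff_sub, coeff_rename_eq_zero, sub_zero]
  rintro u hu
  refine (hc ?_).elim
  rw [← hu]
  exact Finsupp.mapDomain_of_notMem_range _ _ (by simp)

lemma coeff_vanishingForm_mapDomain (y : κ → Fin 2 → K) (Q : homogeneousSubmodule σ K d)
    (m : Fin 2 →₀ ℕ) :
    coeff (m.mapDomain (e ∘ .inl)) (vanishingForm e y Q : MvPolynomial σ K) =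
      coeff (m.mapDomain (e ∘ .inl)) (Q : MvPolynomial σ K) -
        coeff m (pullback (graphMatrix e y) Q : MvPolynomial (Fin 2) K) := by
  rw [coe_vanishingForm, coeff_sub,
    coeff_rename_mapDomain _ (e.injective.comp Sum.inl_injective)]

/-- The exponent of `x_a ^ (d - 1) * x_b`. -/
def powMulExponent {σ : Type*} (hd : 1 ≤ d) (a b : σ) : Exponent σ d :=
  ⟨.single a (d - 1) + .single b 1, by
    rw [map_add, Finsupp.degree_single, Finsupp.degree_single, Nat.sub_add_cancel hd]⟩

lemma coeff_mapDomain_monomialForm (hd : 1 ≤ d) (c : κ) (m : Fin 2 →₀ ℕ) :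
    coeff (m.mapDomain (e ∘ .inl))
      (monomialForm K (powMulExponent hd (e (.inl 0)) (e (.inr c))) : MvPolynomial σ K) = 0 := by
  classical
  rw [coe_monomialForm, coeff_monomial, if_neg]
  intro h
  have hc := DFunLike.congr_fun h (e (.inr c))
  rw [Finsupp.mapDomain_of_notMem_range _ _ (by simp)] at hc
  simp [powMulExponent] at hc

lemma coeff_pullback_graphMatrix_monomialForm (hd : 1 ≤ d) (y : κ → Fin 2 → K) (c : κ) (i : Fin 2) :
    coeff (powMulExponent hd 0 i).1 (pullback (graphMatrix e y)
      (monomialForm K (powMulExponent hd (e (.inl 0)) (e (.inr c)))) : MvPolynomial (Fin 2) K) =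
      y c i := by
  have hpullback : (pullback (graphMatrix e y)
      (monomialForm K (powMulExponent hd (e (.inl 0)) (e (.inr c)))) : MvPolynomial (Fin 2) K) =
      ∑ i, monomial (powMulExponent hd 0 i).1 (y c i) := by
    rw [coe_pullback, coe_monomialForm, powMulExponent, ← one_mul (1 : K), ← monomial_mul, map_mul,
      ← X_pow_eq_monomial, map_pow, bind₁_X_right, toMvPolynomial_graphMatrix_inl, ← X,
      bind₁_X_right, toMvPolynomial_graphMatrix_inr, X_pow_eq_monomial, Finset.mul_sum]
    simp only [monomial_mul, one_mul, powMulExponent]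
  rw [hpullback]
  fin_cases i <;> simp [powMulExponent, Fin.sum_univ_two, coeff_monomial, Finsupp.single_left_inj]

/-- Parameters: a tuple `Q` and a line `y`. The coefficients of `vanishingForm e y Q` off the line
are those of `Q`, and when `Q` specializes to the monomials `x_a ^ (d - 1) * x_c` two further
coefficients specialize to the parameters of the line. -/
lemma algIndepOn_coeff_lineLocus [Infinite K] [Finite σ] (hd : 1 ≤ d) (ι : κ ↪ J) :
    AlgIndepOn (Sum.elim
      (fun (t : κ × Fin 2) (F : FormTuple K σ J d) =>
        coeff ((powMulExponent hd 0 t.2).1.mapDomain (e ∘ .inl)) (F (ι t.1) : MvPolynomial σ K))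
      fun (u : J × OffLineExponent e d) F => coeff u.2.1.1 (F u.1 : MvPolynomial σ K))
      (lineLocus K σ J d) := by
  have hoffLine : AlgIndepOn (fun (u : J × OffLineExponent e d) (Q : FormTuple K σ J d) =>
      coeff u.2.1.1 (Q u.1 : MvPolynomial σ K)) Set.univ :=
    AlgebraicIndependent.comp algIndepOn_coeff_univ (Prod.map id Subtype.val)
      (Function.injective_id.prodMap Subtype.val_injective)
  have hindep := AlgIndepOn.sumElim_of_specialization (β := κ → Fin 2 → K)
    (g := fun (t : κ × Fin 2) z => coeff ((powMulExponent hd 0 t.2).1.mapDomain (e ∘ .inl))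
      (vanishingForm e z.2 (z.1 (ι t.1)) : MvPolynomial σ K))
    (q₀ := Function.extend ι
      (fun c => monomialForm K (powMulExponent hd (e (.inl 0)) (e (.inr c)))) 0)
    (fun u => (isPolynomialMap_coeff _).comp (by fun_prop)) hoffLine
    (fun t y => (isPolynomialMap_coeff _).comp
      ((isPolynomialMap_linearMap (vanishingForm e y)).comp (by fun_prop))) ?_
  · refine hindep.of_forall_exists_eq fun z _ => ⟨fun j => vanishingForm e z.2 (z.1 j),
      mem_lineLocus_iff_exists_matrix.2 ⟨graphMatrix e z.2, linearIndependent_col_graphMatrix e _,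
        fun j => pullback_vanishingForm e _ _⟩, ?_⟩
    rintro (t | u)
    · rfl
    · exact coeff_vanishingForm_of_offLine e _ _ _
  · refine AlgIndepOn.coordinates_univ.of_forall_exists_eq fun z _ =>
      ⟨fun c i => -z (c, i), trivial, fun t => ?_⟩
    rw [coeff_vanishingForm_mapDomain]
    dsimp only
    rw [ι.injective.extend_apply,
      coeff_pullback_graphMatrix_monomialForm, coeff_mapDomain_monomialForm, zero_sub, neg_neg]

include e in
lemma natCard_le_dimSet_lineLocus [IsAlgClosed K] [Finite σ] [Finite J] (hd : 1 ≤ d) (ι : κ ↪ J)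
    [TopologicalSpace (FormTuple K σ J d)] [IsZariski K (FormTuple K σ J d)] :
    ((Nat.card J * (Nat.card (Exponent σ d) - (d + 1)) + 2 * Nat.card κ : ℕ) : WithBot ℕ∞) ≤
      dimSet (lineLocus K σ J d) := by
  have : Finite κ := .of_injective ι ι.injective
  have : Nontrivial σ := (e.injective.comp Sum.inl_injective).nontrivial
  have hcard := (algIndepOn_coeff_lineLocus (K := K) e hd ι).natCard_le_dimSet
    isIrreducible_lineLocus <| by
      rintro (t | u) <;> exact (isPolynomialMap_coeff _).comp (by fun_prop)
  refine le_trans (Nat.cast_le.2 ?_) hcard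
  rw [Nat.card_sum, Nat.card_prod, Nat.card_prod, Nat.card_fin, add_comm, mul_comm 2]
  gcongr
  exact Nat.sub_le_of_le_add (natCard_exponent_le_natCard_offLineExponent_add e)

end LineLocusDimension

section GeneralPosition

variable {K} {V : Type*} [AddCommGroup V] [Module K V]

variable (K) in
/-- A set of vectors is in general position up to order `n` if each `n` of its members are linearly
independent. -/
def InGeneralPosition (n : ℕ) (A : Set V) : Prop :=
  ∀ B : Finset V, ↑B ⊆ A → B.card ≤ n → LinearIndepOn K id (B : Set V)

lemma InGeneralPosition.insert {n : ℕ} {A : Set V} (hA : InGeneralPosition K (n + 1) A) {y : V}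
    (hy : ∀ B : Finset V, ↑B ⊆ A → B.card ≤ n → y ∉ Submodule.span K (B : Set V)) :
    InGeneralPosition K (n + 1) (insert y A) := fun B hBA hB => by
  classical
  by_cases hyB : y ∈ B
  · have hsub : (B.erase y : Set V) ⊆ A := by
      rw [Finset.coe_erase]
      exact Set.sdiff_singleton_subset_iff.2 hBA
    have hcard : (B.erase y).card ≤ n := by
      rw [Finset.card_erase_of_mem hyB]
      exact Nat.sub_le_of_le_add hB
    rw [← Finset.insert_erase hyB, Finset.coe_insert]
    exact (hA _ hsub (hcard.trans n.le_succ)).id_insert (hy _ hsub hcard)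
  · exact hA B ((Set.subset_insert_iff_of_notMem hyB).1 hBA) hB

lemma exists_inGeneralPosition {X : Set V} {n : ℕ} (hn : 1 ≤ n)
    (hX : ∀ A : Finset V, ∃ x ∈ X, ∀ B ⊆ A, B.card ≤ n → x ∉ Submodule.span K (B : Set V))
    (N : ℕ) : ∃ A : Finset V, ↑A ⊆ X ∧ A.card = N ∧ InGeneralPosition K (n + 1) (A : Set V) := by
  classical
  induction N with
  | zero =>
    refine ⟨∅, by simp, rfl, fun B hB _ => ?_⟩
    rw [Finset.coe_empty, Set.subset_empty_iff] at hB
    exact hB ▸ linearIndepOn_empty K id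
  | succ N ih =>
    obtain ⟨A, hAX, rfl, hA⟩ := ih
    obtain ⟨y, hyX, hy⟩ := hX A
    have hyA : y ∉ A := fun hyA => hy {y} (Finset.singleton_subset_iff.2 hyA) hn
      (Submodule.subset_span (Finset.mem_coe.2 (Finset.mem_singleton_self y)))
    refine ⟨Insert.insert y A, ?_, Finset.card_insert_of_notMem hyA, ?_⟩
    · rw [Finset.coe_insert]
      exact Set.insert_subset hyX hAX
    · rw [Finset.coe_insert]
      exact hA.insert fun B hB => hy B (Finset.coe_subset.1 hB)

lemma exists_det_ne_zero_of_linearIndependent {n I : Type*} [Fintype n] [DecidableEq n]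
    {w : n → I → K} (hw : LinearIndependent K w) :
    ∃ B : n → I, (Matrix.of fun i l => w l (B i)).det ≠ 0 := by
  obtain ⟨B, hB⟩ := exists_linearIndependent_comp_of_span_eq_top (Pi.basisFun K n)
    (span_flip_eq_top_iff_linearIndependent.2 hw)
  have hunit : IsUnit (Matrix.of fun i l => w l (B i)) :=
    Matrix.linearIndependent_rows_iff_isUnit.1 hB
  exact ⟨B, ((Matrix.isUnit_iff_isUnit_det _).1 hunit).ne_zero⟩

end GeneralPosition

section Interpolation

variable {K} {σ : Type*}

/-- Castelnuovo's argument: `d` hyperplanes, through `n` points each, separate `x` from `A`. -/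
lemma exists_form_eval_ne_zero_of_inGeneralPosition [Finite σ] {n d : ℕ} {x : σ → K}
    {A : Finset (σ → K)} (hxA : x ∉ A) (hA : InGeneralPosition K (n + 1) (insert x A : Set (σ → K)))
    (hcard : A.card ≤ d * n) : ∃ G : homogeneousSubmodule σ K d,
      eval x (G : MvPolynomial σ K) ≠ 0 ∧ ∀ y ∈ A, eval y (G : MvPolynomial σ K) = 0 := by
  classical
  induction d generalizing A with
  | zero =>
    obtain rfl : A = ∅ := Finset.card_eq_zero.1 (Nat.le_zero.1 (hcard.trans_eq n.zero_mul))
    exact ⟨⟨1, isHomogeneous_one σ K⟩, by simp⟩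
  | succ d ih =>
    obtain ⟨B, hBA, hB⟩ := Finset.exists_subset_card_eq (min_le_right n A.card)
    have hxB : x ∉ Submodule.span K (B : Set (σ → K)) := by
      refine ((linearIndepOn_id_insert fun h => hxA (hBA h)).1 ?_).2
      rw [← Finset.coe_insert]
      refine hA _ ?_ ((Finset.card_insert_le x B).trans (by omega))
      rw [Finset.coe_insert]
      exact Set.insert_subset_insert hBA
    obtain ⟨φ, hφx, hφB⟩ := Submodule.exists_le_ker_of_notMem hxB
    obtain ⟨ℓ, hℓ, hℓφ⟩ := exists_isHomogeneous_one_eval_eq φ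
    obtain ⟨G, hGx, hG⟩ := ih (A := A \ B) (by simp [hxA])
      (fun C hC => hA C (hC.trans (Set.insert_subset_insert (by simp))))
      (by rw [Finset.card_sdiff_of_subset hBA, hB]; rw [add_mul, one_mul] at hcard; omega)
    refine ⟨⟨G * ℓ, G.2.mul hℓ⟩, ?_, fun y hy => ?_⟩
    · rw [map_mul, hℓφ]
      exact mul_ne_zero hGx hφx
    · rw [map_mul, hℓφ]
      by_cases hyB : y ∈ B
      · exact mul_eq_zero_of_right _ (hφB (Submodule.subset_span hyB))
      · exact mul_eq_zero_of_left (hG y (Finset.mem_sdiff.2 ⟨hy, hyB⟩)) _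

lemma linearIndependent_eval_monomial_of_inGeneralPosition [Finite σ] {n d : ℕ}
    {A : Finset (σ → K)} (hA : InGeneralPosition K (n + 1) (A : Set (σ → K)))
    (hcard : A.card ≤ d * n + 1) : LinearIndependent K
      fun (x : A) (m : Exponent σ d) => eval x.1 (monomialForm K m : MvPolynomial σ K) := by
  classical
  have hform (x : A) : ∃ G : homogeneousSubmodule σ K d, eval x.1 (G : MvPolynomial σ K) ≠ 0 ∧
      ∀ y ∈ A.erase x, eval y (G : MvPolynomial σ K) = 0 := by
    refine exists_form_eval_ne_zero_of_inGeneralPosition (n := n) (Finset.notMem_erase x.1 A) ?_ ?_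
    · rwa [← Finset.coe_insert, Finset.insert_erase x.2]
    · rw [Finset.card_erase_of_mem x.2]
      exact Nat.sub_le_of_le_add hcard
  choose G hGx hG using hform
  have hpairing (x y : A) : Fintype.linearCombination K
      (fun m : Exponent σ d => coeff m.1 (G x : MvPolynomial σ K))
      (fun m => eval y.1 (monomialForm K m : MvPolynomial σ K)) =
      eval y.1 (G x : MvPolynomial σ K) := by
    simp only [Fintype.linearCombination_apply, eval_eq_sum_exponent (G x).2, smul_eq_mul,
      coe_monomialForm, mul_comm]
  refine .of_pairwise_dual_eq_zero_one _ (fun x => (eval x.1 (G x : MvPolynomial σ K))⁻¹ •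
    Fintype.linearCombination K fun m : Exponent σ d => coeff m.1 (G x : MvPolynomial σ K))
    (fun x y hxy => ?_) fun x => ?_
  · beta_reduce
    rw [LinearMap.smul_apply, hpairing, hG x y (by simpa [Subtype.coe_inj] using hxy.symm),
      smul_zero]
  · rw [LinearMap.smul_apply, hpairing, smul_eq_mul, inv_mul_cancel₀ (hGx x)]

end Interpolation

section IrreducibleSet

variable {K} {σ : Type*} {X : Set (σ → K)}

lemma eval_ne_zero_of_notMem_vanishingIdeal {q : MvPolynomial σ K} (hq : q ∉ vanishingIdeal K X) :
    ∃ x ∈ X, eval x q ≠ 0 := by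
  contrapose! hq
  exact hq

lemma exists_mem_forall_notMem_submodule [Finite σ] [(vanishingIdeal K X).IsPrime] {ι : Type*}
    {s : Finset ι} {W : ι → Submodule K (σ → K)} (hW : ∀ i ∈ s, ∃ x ∈ X, x ∉ W i) :
    ∃ x ∈ X, ∀ i ∈ s, x ∉ W i := by
  have hlinear (i : s) : ∃ ℓ ∉ vanishingIdeal K X, ∀ x ∈ W i, eval x ℓ = 0 := by
    obtain ⟨x, hxX, hx⟩ := hW i i.2
    obtain ⟨φ, hφx, hφ⟩ := Submodule.exists_le_ker_of_notMem hx
    obtain ⟨ℓ, -, hℓ⟩ := exists_isHomogeneous_one_eval_eq φ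
    exact ⟨ℓ, fun h => hφx ((hℓ x).symm.trans (h x hxX)), fun y hy => (hℓ y).trans (hφ hy)⟩
  choose ℓ hℓX hℓW using hlinear
  have hprod : ∏ i, ℓ i ∉ vanishingIdeal K X := by
    simpa only [Ideal.IsPrime.prod_mem_iff, not_exists, not_and] using fun i _ => hℓX i
  obtain ⟨x, hxX, hx⟩ := eval_ne_zero_of_notMem_vanishingIdeal hprod
  rw [map_prod, Finset.prod_ne_zero_iff] at hx
  exact ⟨x, hxX, fun i hi hxW => hx ⟨i, hi⟩ (Finset.mem_univ _) (hℓW ⟨i, hi⟩ x hxW)⟩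

lemma exists_inGeneralPosition_of_isPrime [Finite σ] [(vanishingIdeal K X).IsPrime] {n : ℕ}
    (hn : 1 ≤ n) (hX : n < Module.finrank K (Submodule.span K X)) (N : ℕ) :
    ∃ A : Finset (σ → K), ↑A ⊆ X ∧ A.card = N ∧ InGeneralPosition K (n + 1) (A : Set (σ → K)) := by
  classical
  refine exists_inGeneralPosition hn (fun A => ?_) N
  obtain ⟨x, hxX, hx⟩ := exists_mem_forall_notMem_submodule (X := X)
    (s := {B ∈ A.powerset | B.card ≤ n}) (W := fun B => Submodule.span K (B : Set (σ → K)))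
    fun B hB => by
      by_contra! hXB
      have hle := (Submodule.finrank_mono (Submodule.span_le.2 hXB)).trans
        ((finrank_span_finset_le_card B).trans (Finset.mem_filter.1 hB).2)
      exact hX.not_ge hle
  exact ⟨x, hxX, fun B hBA hB => hx B (Finset.mem_filter.2 ⟨Finset.mem_powerset.2 hBA, hB⟩)⟩

variable {T : Type*} {c : T → σ}

lemma AlgIndepOn.inter_eval_ne_zero [(vanishingIdeal K X).IsPrime]
    (hc : AlgIndepOn (fun t x => x (c t)) X) {q : MvPolynomial σ K}
    (hq : q ∉ vanishingIdeal K X) :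
    AlgIndepOn (fun t x => x (c t)) {x | x ∈ X ∧ eval x q ≠ 0} := by
  refine algIndepOn_iff.2 fun p hp => algIndepOn_iff.1 hc p ?_
  have hmul : rename c p * q ∈ vanishingIdeal K X := fun x hx => by
    rw [aeval_eq_eval, map_mul]
    by_cases hqx : eval x q = 0
    · exact mul_eq_zero_of_right _ hqx
    · rw [eval_rename]
      exact mul_eq_zero_of_left (hp x ⟨hx, hqx⟩) _
  intro x hx
  have hx0 := (Ideal.IsPrime.mem_or_mem ‹_› hmul).resolve_right hq x hx
  rwa [aeval_eq_eval, eval_rename] at hx0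

/-- Powers of an irreducible set are irreducible, in terms of algebraic independence. -/
lemma algIndepOn_tuples [Finite σ] [(vanishingIdeal K X).IsPrime]
    (hc : AlgIndepOn (fun t x => x (c t)) X) {I : Type*} [Finite I] {Q : (I → σ → K) → K}
    (hQ : IsPolynomialMap K Q) {p : I → σ → K} (hpX : ∀ l, p l ∈ X) (hp : Q p ≠ 0) :
    AlgIndepOn (fun (t : I × T) p => p t.1 (c t.2)) {p | (∀ l, p l ∈ X) ∧ Q p ≠ 0} := by
  induction I using Finite.induction_empty_option with
  | of_equiv e ih =>
    have hcomp : IsPolynomialMap K fun p' => Q (p' ∘ e.symm) :=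
      hQ.comp (isPolynomialMap_linearMap (LinearMap.funLeft K (σ → K) e.symm))
    have hpe : p ∘ e ∘ e.symm = p := by rw [e.self_comp_symm, Function.comp_id]
    have hindep := (ih hcomp (p := p ∘ e) (fun l => hpX (e l)) (hpe.symm ▸ hp)).comp
      (Prod.map e.symm id) (e.symm.injective.prodMap Function.injective_id)
    exact AlgIndepOn.of_forall_exists_eq hindep fun p' hp' =>
      ⟨p' ∘ e.symm, ⟨fun l => hp'.1 _, hp'.2⟩, fun _ => rfl⟩
  | h_empty =>
    refine algIndepOn_iff.2 fun P hP => ?_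
    obtain ⟨a, rfl⟩ := C_surjective (PEmpty × T) P
    rw [← eval_C (f := fun t : PEmpty × T => p t.1 (c t.2)) a, hP p ⟨hpX, hp⟩, C_0]
  | @h_option I _ ih =>
    let cons (p' : I → σ → K) (x : σ → K) : Option I → σ → K := fun l => l.elim x p'
    have hcons : cons (p ∘ some) (p none) = p := _root_.funext fun l => by cases l <;> rfl
    have hinit := ih (Q := fun p' => Q (cons p' (p none))) (p := p ∘ some)
      (hQ.comp (.pi fun l => by cases l <;> dsimp only [cons, Option.elim] <;> fun_prop))
      (fun l => hpX _) (by rwa [hcons])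
    have hlast (p' : I → σ → K) (hp' : Q (cons p' (p none)) ≠ 0) :
        AlgIndepOn (fun t x => x (c t)) {x | x ∈ X ∧ Q (cons p' x) ≠ 0} := by
      obtain ⟨q, hq⟩ := IsPolynomialMap.exists_mvPolynomial (f := fun x => Q (cons p' x))
        (hQ.comp (.pi fun l => by cases l <;> dsimp only [cons, Option.elim] <;> fun_prop))
      simp only [hq] at hp' ⊢
      exact hc.inter_eval_ne_zero fun h => hp' (h _ (hpX none))
    have hindep := (hinit.sumElim fun p' hp' => hlast p' hp'.2).comp
      optionProdEquiv optionProdEquiv.injective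
    refine AlgIndepOn.of_forall_exists_eq hindep fun z hz =>
      ⟨cons z.1 z.2, ⟨fun l => ?_, hz.2.2⟩, fun ⟨l, t⟩ => by cases l <;> rfl⟩
    cases l
    exacts [hz.2.1, hz.1.1 _]

end IrreducibleSet

section SpannedPoints

variable {K} {σ ι κ I : Type*} [Fintype ι]

/-- The family consisting of the points `w.1 j` and of their linear combinations with coefficients
`w.2 b`. -/
def spannedPoints (w : (ι → σ → K) × (κ → ι → K)) : ι ⊕ κ → σ → K :=
  Sum.elim w.1 fun b => ∑ j, w.2 b j • w.1 j

/-- The values of the monomials with exponents `B` at the points `p`. -/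
def evalMatrix {d : ℕ} (B : I → Exponent σ d) (p : I → σ → K) : Matrix I I K :=
  .of fun i l => eval (p l) (monomialForm K (B i) : MvPolynomial σ K)

lemma exists_spannedPoints_eq {W : Submodule K (σ → K)} [FiniteDimensional K W]
    (hW : Module.finrank K W = Fintype.card ι) {p : ι ⊕ κ → σ → K} (hpW : ∀ l, p l ∈ W)
    (hp : LinearIndependent K (p ∘ .inl)) : ∃ w, spannedPoints w = p := by
  have hspan : Submodule.span K (Set.range (p ∘ .inl)) = W :=
    Submodule.eq_of_le_of_finrank_eq (Submodule.span_le.2 (Set.range_subset_iff.2 fun j => hpW _))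
      ((finrank_span_eq_card hp).trans hW.symm)
  have hcomb (b : κ) : ∃ a : ι → K, ∑ j, a j • (p ∘ .inl) j = p (.inr b) :=
    (Submodule.mem_span_range_iff_exists_fun K).1 (hspan ▸ hpW (.inr b))
  choose a ha using hcomb
  exact ⟨(p ∘ .inl, a), _root_.funext (Sum.rec (fun _ => rfl) ha)⟩

lemma linearIndependent_of_det_ne_zero [DecidableEq ι] {w : ι → σ → K} {C : ι → σ}
    (h : (Matrix.of fun i l => w l (C i)).det ≠ 0) : LinearIndependent K w :=
  .of_comp (LinearMap.funLeft K K C) <|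
    Matrix.linearIndependent_cols_iff_isUnit.2 ((Matrix.isUnit_iff_isUnit_det _).2 h.isUnit)

variable [Finite σ] [Fintype κ] {X : Set (σ → K)} {n d : ℕ}

lemma exists_points_linearIndependent [(vanishingIdeal K X).IsPrime] (hn : 1 ≤ n)
    (hι : Fintype.card ι = n + 1) (hX : Module.finrank K (Submodule.span K X) = n + 1)
    (hκ : Fintype.card κ + n ≤ d * n) : ∃ p : ι ⊕ κ → σ → K, (∀ l, p l ∈ X) ∧
      LinearIndependent K (p ∘ .inl) ∧ LinearIndependent K
        fun l (m : Exponent σ d) => eval (p l) (monomialForm K m : MvPolynomial σ K) := by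
  obtain ⟨A, hAX, hAcard, hA⟩ :=
    exists_inGeneralPosition_of_isPrime hn (n.lt_succ_self.trans_eq hX.symm) (Fintype.card (ι ⊕ κ))
  let e : ι ⊕ κ ≃ A := Fintype.equivOfCardEq (hAcard.symm.trans (Fintype.card_coe A).symm)
  have hinj : Function.Injective fun j : ι => (e (.inl j)).1 :=
    Subtype.val_injective.comp (e.injective.comp Sum.inl_injective)
  refine ⟨fun l => (e l).1, fun l => hAX (e l).2, ?_, ?_⟩
  · have hbasis := hA (Finset.univ.map ⟨_, hinj⟩) (fun x hx => ?_) (by simp [hι])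
    · exact LinearIndependent.comp hbasis (fun j => ⟨(e (.inl j)).1, by simp⟩)
        fun i j hij => by simpa using hij
    · obtain ⟨j, -, rfl⟩ := Finset.mem_map.1 (Finset.mem_coe.1 hx)
      exact (e (.inl j)).2
  · refine (linearIndependent_eval_monomial_of_inGeneralPosition hA ?_).comp e e.injective
    rw [hAcard, Fintype.card_sum, hι]
    omega

lemma exists_algIndepOn_spannedPoints [DecidableEq ι] [DecidableEq κ]
    [(vanishingIdeal K X).IsPrime] {T : Type*} {c : T → σ}
    (hc : AlgIndepOn (fun t x => x (c t)) X) (hn : 1 ≤ n) (hι : Fintype.card ι = n + 1)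
    (hX : Module.finrank K (Submodule.span K X) = n + 1) (hκ : Fintype.card κ + n ≤ d * n) :
    ∃ B : ι ⊕ κ → Exponent σ d, AlgIndepOn
      (fun (t : (ι ⊕ κ) × T) w => spannedPoints w t.1 (c t.2))
      {w | (∀ l, spannedPoints w l ∈ X) ∧ (evalMatrix B (spannedPoints w)).det ≠ 0} := by
  obtain ⟨p, hpX, hbasis, heval⟩ := exists_points_linearIndependent hn hι hX hκ
  obtain ⟨C, hC⟩ := exists_det_ne_zero_of_linearIndependent hbasis
  obtain ⟨B, hB⟩ := exists_det_ne_zero_of_linearIndependent heval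
  have hpoly : IsPolynomialMap K fun p : ι ⊕ κ → σ → K =>
      (Matrix.of fun i l => p (.inl l) (C i)).det * (evalMatrix B p).det := by
    refine .mul (.det fun i l => ?_) (.det fun i l => ?_)
    · simp only [Matrix.of_apply]
      fun_prop
    · simp only [evalMatrix, Matrix.of_apply]
      fun_prop
  refine ⟨B, (algIndepOn_tuples hc hpoly hpX (mul_ne_zero hC hB)).of_forall_exists_eq
    fun p' hp' => ?_⟩
  obtain ⟨w, rfl⟩ := exists_spannedPoints_eq (hX.trans hι.symm)
    (fun l => Submodule.subset_span (hp'.1 l))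
    (linearIndependent_of_det_ne_zero (left_ne_zero_of_mul hp'.2))
  exact ⟨w, ⟨hp'.1, right_ne_zero_of_mul hp'.2⟩, fun _ => rfl⟩

end SpannedPoints

section WitnessVariety

open scoped Matrix

lemma exists_isPrime_le_ringKrullDim_quotient {R : Type*} [CommRing R] {I : Ideal R} {n : ℕ}
    (h : (n : WithBot ℕ∞) ≤ ringKrullDim (R ⧸ I)) :
    ∃ P : Ideal R, P.IsPrime ∧ I ≤ P ∧ (n : WithBot ℕ∞) ≤ ringKrullDim (R ⧸ P) := by
  rw [ringKrullDim_quotient] at h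
  obtain ⟨l, hl⟩ := Order.le_krullDim_iff.1 h
  refine ⟨(l 0).1.asIdeal, (l 0).1.isPrime, (l 0).2, ?_⟩
  rw [ringKrullDim_quotient]
  exact Order.le_krullDim_iff.2
    ⟨⟨l.length, fun i => ⟨(l i).1, l.monotone (Fin.zero_le i)⟩, fun i => l.step i⟩, hl⟩

variable {K} {σ : Type*}

lemma AlgIndepOn.surjective_funLeft_comp_subtype {T : Type*} [Finite T] {c : T → σ}
    {X : Set (σ → K)} (h : AlgIndepOn (fun t x => x (c t)) X) : Function.Surjective
      (LinearMap.funLeft K K c ∘ₗ (Submodule.span K X).subtype) := by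
  rw [← LinearMap.range_eq_top]
  by_contra hne
  obtain ⟨f, hf, hle⟩ := Submodule.exists_le_ker_of_lt_top _ (lt_top_iff_ne_top.2 hne)
  obtain ⟨p, -, hp⟩ := exists_isHomogeneous_one_eval_eq f
  refine hf (LinearMap.ext fun y => ?_)
  have hp0 : p = 0 := algIndepOn_iff.1 h p fun x hx =>
    (hp _).trans (hle ⟨⟨x, Submodule.subset_span hx⟩, rfl⟩)
  rw [← hp, hp0, map_zero, LinearMap.zero_apply]

variable [Finite σ]

lemma exists_algIndepOn_zeroLocus [IsAlgClosed K] {P : Ideal (MvPolynomial σ K)} [P.IsPrime] {n : ℕ}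
    (h : (n : WithBot ℕ∞) ≤ ringKrullDim (MvPolynomial σ K ⧸ P)) :
    ∃ c : Fin n → σ, AlgIndepOn (fun t x => x (c t)) (zeroLocus K P) := by
  have hadj : Algebra.adjoin K (Set.range fun s => Ideal.Quotient.mk P (X s)) = ⊤ := by
    have hmap := congrArg (Subalgebra.map (Ideal.Quotient.mkₐ K P)) (adjoin_range_X (R := K))
    rwa [AlgHom.map_adjoin, ← Set.range_comp, Algebra.map_top,
      (AlgHom.range_eq_top _).2 (Ideal.Quotient.mkₐ_surjective K P)] at hmap
  obtain ⟨m, c, hc, hm⟩ := exists_algebraicIndependent_comp_ringKrullDim_eq hadj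
  have hnm : n ≤ m := by exact_mod_cast hm ▸ h
  have hcn := hc.comp _ (Fin.castLE_injective hnm)
  refine ⟨c ∘ Fin.castLE hnm, algIndepOn_iff.2 fun g hg => ?_⟩
  have hgP : rename (c ∘ Fin.castLE hnm) g ∈ P := by
    rw [← MvPolynomial.IsPrime.vanishingIdeal_zeroLocus (K := K) P]
    intro x hx
    rw [aeval_rename]
    exact hg x hx
  have hmk := Ideal.Quotient.eq_zero_iff_mem.2 hgP
  rw [← Ideal.Quotient.mkₐ_eq_mk K, aeval_unique (Ideal.Quotient.mkₐ K P), aeval_rename] at hmk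
  exact algebraicIndependent_iff.1 hcn g hmk

lemma mem_lineLocus_of_finrank_span_le_two [Infinite K] {J : Type*} {d : ℕ}
    {F : FormTuple K σ J d} {X : Set (σ → K)} {c : Fin 2 → σ}
    (hc : AlgIndepOn (fun t x => x (c t)) X) (hX : Module.finrank K (Submodule.span K X) ≤ 2)
    (hF : ∀ x ∈ X, ∀ i, eval x (F i : MvPolynomial σ K) = 0) : F ∈ lineLocus K σ J d := by
  set π := LinearMap.funLeft K K c ∘ₗ (Submodule.span K X).subtype
  have hsurj : Function.Surjective π := hc.surjective_funLeft_comp_subtype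
  have hfinrank : Module.finrank K (Submodule.span K X) = Module.finrank K (Fin 2 → K) :=
    le_antisymm (hX.trans_eq (Module.finrank_fin_fun K).symm)
      (LinearMap.finrank_le_finrank_of_surjective hsurj)
  have hinj := (LinearMap.injective_iff_surjective_of_finrank_eq_finrank hfinrank).2 hsurj
  let E := LinearEquiv.ofBijective π ⟨hinj, hsurj⟩
  let A := ((Submodule.span K X).subtype ∘ₗ E.symm.toLinearMap).toMatrix'
  have hA (x) (hx : x ∈ X) : A *ᵥ (x ∘ c) = x := by
    have hE : E ⟨x, Submodule.subset_span hx⟩ = x ∘ c := rfl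
    rw [LinearMap.toMatrix'_mulVec, ← hE]
    simp only [LinearMap.comp_apply, LinearEquiv.coe_coe, E.symm_apply_apply,
      Submodule.subtype_apply]
  refine mem_lineLocus_iff_exists_matrix.2 ⟨A, ?_, fun i => Subtype.ext ?_⟩
  · rw [← Matrix.mulVec_injective_iff]
    convert Subtype.val_injective.comp E.symm.injective
    exact _root_.funext (LinearMap.toMatrix'_mulVec _)
  · refine algIndepOn_iff.1 hc _ fun x hx => ?_
    rw [eval_pullback]
    exact (congrArg (eval · _) (hA x hx)).trans (hF x hx i)

lemma exists_algIndepOn_of_notMem_lineLocus [IsAlgClosed K] {J : Type*} {d : ℕ}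
    {F : FormTuple K σ J d} (hF : (2 : WithBot ℕ∞) ≤ ringKrullDim (MvPolynomial σ K ⧸
      Ideal.span (Set.range fun i => (F i : MvPolynomial σ K)))) (hL : F ∉ lineLocus K σ J d) :
    ∃ X : Set (σ → K), (vanishingIdeal K X).IsPrime ∧ 2 < Module.finrank K (Submodule.span K X) ∧
      (∃ c : Fin 2 → σ, AlgIndepOn (fun t x => x (c t)) X) ∧
      ∀ x ∈ X, ∀ i, eval x (F i : MvPolynomial σ K) = 0 := by
  obtain ⟨P, hP, hFP, hdim⟩ := exists_isPrime_le_ringKrullDim_quotient (n := 2) hF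
  obtain ⟨c, hc⟩ := exists_algIndepOn_zeroLocus hdim
  have hFX (x) (hx : x ∈ zeroLocus K P) (i) : eval x (F i : MvPolynomial σ K) = 0 :=
    hx _ (hFP (Ideal.subset_span ⟨i, rfl⟩))
  refine ⟨zeroLocus K P, ?_, ?_, ⟨c, hc⟩, hFX⟩
  · rwa [MvPolynomial.IsPrime.vanishingIdeal_zeroLocus (K := K) P]
  · by_contra! hX
    exact hL (mem_lineLocus_of_finrank_span_le_two hc hX hFX)

end WitnessVariety

section InterpolationRemainder

open scoped Matrix

variable {K} {σ I : Type*} [Fintype I] [DecidableEq I] {d : ℕ}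

/-- The form `G` corrected by a combination of the monomials with exponents `B` so as to vanish at
all the points `p`, and multiplied by the determinant of the evaluation matrix to clear
denominators. -/
def interpolationRemainder (B : I → Exponent σ d) (p : I → σ → K)
    (G : homogeneousSubmodule σ K d) : homogeneousSubmodule σ K d :=
  (evalMatrix B p).det • G - ∑ i,
    ((fun l => eval (p l) (G : MvPolynomial σ K)) ᵥ* (evalMatrix B p).adjugate) i •
      monomialForm K (B i)

omit [DecidableEq I] in
lemma eval_sum_smul_monomialForm (B : I → Exponent σ d) (p : I → σ → K) (h : I → K) (l : I) :
    eval (p l) ((∑ i, h i • monomialForm K (B i) : homogeneousSubmodule σ K d) :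
      MvPolynomial σ K) = (h ᵥ* evalMatrix B p) l := by
  simp only [Submodule.coe_sum, Submodule.coe_smul, map_sum, smul_eval]
  rfl

lemma exists_interpolationRemainder_eq {B : I → Exponent σ d} {p : I → σ → K}
    (hdet : (evalMatrix B p).det ≠ 0) {F : homogeneousSubmodule σ K d}
    (hF : ∀ l, eval (p l) (F : MvPolynomial σ K) = 0) (y : I → K) :
    ∃ G : homogeneousSubmodule σ K d, (∀ l, eval (p l) (G : MvPolynomial σ K) = y l) ∧
      interpolationRemainder B p G = F := by
  set N := evalMatrix B p
  let H : homogeneousSubmodule σ K d := ∑ i, (y ᵥ* N.adjugate) i • monomialForm K (B i)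
  have hG (l) : eval (p l) ((N.det⁻¹ • (F + H) : homogeneousSubmodule σ K d) :
      MvPolynomial σ K) = y l := by
    rw [Submodule.coe_smul, smul_eval, Submodule.coe_add, map_add, hF, zero_add,
      eval_sum_smul_monomialForm, Matrix.vecMul_vecMul, Matrix.adjugate_mul, Matrix.vecMul_smul,
      Matrix.vecMul_one, Pi.smul_apply, smul_eq_mul, inv_mul_cancel_left₀ hdet]
  refine ⟨_, hG, ?_⟩
  rw [interpolationRemainder, funext hG, smul_inv_smul₀ hdet, add_sub_cancel_right]

variable [Finite σ] {M : Type*} [AddCommGroup M] [Module K M]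

lemma IsPolynomialMap.interpolationRemainder {B : I → Exponent σ d} {p : M → I → σ → K}
    {G : M → homogeneousSubmodule σ K d} (hp : IsPolynomialMap K p) (hG : IsPolynomialMap K G) :
    IsPolynomialMap K fun v => interpolationRemainder B (p v) (G v) := by
  have hentry (i l) : IsPolynomialMap K fun v => evalMatrix B (p v) i l := by
    simp only [evalMatrix, Matrix.of_apply]
    fun_prop
  have := IsPolynomialMap.det hentry
  have := IsPolynomialMap.adjugate hentry
  unfold _root_.interpolationRemainder
  simp only [Matrix.vecMul, dotProduct]
  fun_prop

lemma natCard_add_le_of_algIndepOn [Infinite K] [FiniteDimensional K M] {J T U : Type*}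
    [Finite J] [Finite T] [Finite U] {f : T → FormTuple K σ J d → K}
    (hf : ∀ t, IsPolynomialMap K (f t)) {g : U → M → K} (hg : ∀ u, IsPolynomialMap K (g u))
    {p : M → I → σ → K} (hp : IsPolynomialMap K p) {B : I → Exponent σ d}
    {S : Set (FormTuple K σ J d)} (hfS : AlgIndepOn f S) (hgS : ∀ F ∈ S, AlgIndepOn g {w |
      (∀ j l, eval (p w l) (F j : MvPolynomial σ K) = 0) ∧ (evalMatrix B (p w)).det ≠ 0}) :
    Nat.card T + Nat.card U + Nat.card J * Nat.card I ≤
      Module.finrank K M + Nat.card J * Nat.card (Exponent σ d) := by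
  have hindep : AlgIndepOn (α := M × FormTuple K σ J d)
      (Sum.elim (fun (u : J × I) w => eval (p w.1 u.2) (w.2 u.1 : MvPolynomial σ K))
        (Sum.elim (fun u w => g u w.1)
          fun t w => f t fun j => interpolationRemainder B (p w.1) (w.2 j))) Set.univ := by
    refine ((hfS.sumElim hgS).sumElim fun _ _ =>
      AlgIndepOn.coordinates_univ (T := J × I)).of_forall_exists_eq ?_
    rintro ⟨⟨F, w⟩, y⟩ ⟨⟨-, hF, hdet⟩, -⟩
    choose G hGy hGF using fun j =>
      exists_interpolationRemainder_eq hdet (hF j) fun l => y (j, l)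
    refine ⟨(w, G), trivial, ?_⟩
    rintro (u | u | t)
    · exact hGy _ _
    · rfl
    · exact congrArg (f t) (_root_.funext hGF)
  have := Fintype.ofFinite J
  have hle := hindep.natCard_le_finrank ?_
  · simp only [Nat.card_sum, Nat.card_prod, Module.finrank_prod, Module.finrank_pi_fintype,
      finrank_homogeneousSubmodule, Finset.sum_const, Finset.card_univ, smul_eq_mul,
      ← Nat.card_eq_fintype_card (α := J)] at hle
    omega
  · rintro (u | u | t)
    · exact .eval_form (by fun_prop) (by fun_prop)
    · exact (hg u).comp .fst
    · exact (hf t).comp (.pi fun j => .interpolationRemainder (by fun_prop) (by fun_prop))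

end InterpolationRemainder

section Components

variable {K} {σ J ι κ : Type*} [Fintype ι] [Fintype κ] [DecidableEq ι] [DecidableEq κ] {d : ℕ}

variable (J) in
/-- The tuples having enough common zeros among the configurations of points spanned by `ι` of
them: the coordinates `c` of the configurations on which the monomials `B` are independent and
all forms of the tuple vanish are algebraically independent. -/
def abundantZerosLocus (c : Fin 2 → σ) (B : ι ⊕ κ → Exponent σ d) : Set (FormTuple K σ J d) :=
  {F | AlgIndepOn (fun (t : (ι ⊕ κ) × Fin 2) w => spannedPoints w t.1 (c t.2))
    {w | (∀ j l, eval (spannedPoints w l) (F j : MvPolynomial σ K) = 0) ∧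
      (evalMatrix B (spannedPoints w)).det ≠ 0}}

lemma natCard_add_le_of_algIndepOn_abundantZerosLocus [Infinite K] [Finite σ] [Finite J] {T : Type*}
    [Finite T] {f : T → FormTuple K σ J d → K} (hf : ∀ t, IsPolynomialMap K (f t)) {c : Fin 2 → σ}
    {B : ι ⊕ κ → Exponent σ d} (h : AlgIndepOn f (abundantZerosLocus J c B)) :
    Nat.card T + (Nat.card ι + Nat.card κ) * 2 + Nat.card J * (Nat.card ι + Nat.card κ) ≤
      Nat.card ι * Nat.card σ + Nat.card κ * Nat.card ι +
        Nat.card J * Nat.card (Exponent σ d) := by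
  have := Fintype.ofFinite σ
  have hp : IsPolynomialMap K fun w : (ι → σ → K) × (κ → ι → K) => spannedPoints w := by
    refine .pi fun l => ?_
    cases l <;> simp only [spannedPoints, Sum.elim_inl, Sum.elim_inr] <;> fun_prop
  have hle := natCard_add_le_of_algIndepOn (B := B) hf
    (g := fun (t : (ι ⊕ κ) × Fin 2) w => spannedPoints w t.1 (c t.2)) (by fun_prop) hp h
    fun _ hF => hF
  simpa only [Nat.card_prod, Nat.card_sum, Module.finrank_prod, Module.finrank_pi_fintype,
    Module.finrank_self, Finset.sum_const, Finset.card_univ, smul_eq_mul, mul_one,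
    ← Nat.card_eq_fintype_card, Nat.card_fin] using hle

lemma exists_mem_abundantZerosLocus [IsAlgClosed K] [Finite σ] {F : FormTuple K σ J d}
    (hd : 1 ≤ d) (hF : (2 : WithBot ℕ∞) ≤ ringKrullDim (MvPolynomial σ K ⧸
      Ideal.span (Set.range fun i => (F i : MvPolynomial σ K)))) (hL : F ∉ lineLocus K σ J d) :
    ∃ n, 2 ≤ n ∧ n < Nat.card σ ∧ ∃ (c : Fin 2 → σ)
      (B : Fin (n + 1) ⊕ Fin ((d - 1) * n) → Exponent σ d), F ∈ abundantZerosLocus J c B := by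
  have := Fintype.ofFinite σ
  obtain ⟨X, hX, hspan, ⟨c, hc⟩, hFX⟩ := exists_algIndepOn_of_notMem_lineLocus hF hL
  obtain ⟨n, hn⟩ := Nat.exists_eq_add_of_lt hspan
  have hnσ : n + 3 ≤ Nat.card σ := by
    have hle := Submodule.finrank_le (Submodule.span K X)
    rw [Module.finrank_fintype_fun_eq_card, ← Nat.card_eq_fintype_card] at hle
    omega
  obtain ⟨B, hB⟩ := exists_algIndepOn_spannedPoints (κ := Fin ((d - 1) * (n + 2))) (d := d)
    (n := n + 2) hc (by omega) (Fintype.card_fin _) (by omega) (by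
      obtain ⟨d, rfl⟩ := Nat.exists_eq_add_of_le' hd
      simp [add_mul])
  exact ⟨n + 2, by omega, by omega, c, B,
    hB.mono fun w hw => ⟨fun j l => hFX _ (hw.1 l) j, hw.2⟩⟩

lemma lt_dim_lineLocus_of_incidence_bound {s n k d N : ℕ} (hn : 2 ≤ n) (hnk : n ≤ k + 1)
    (hd : 1 ≤ d) (h : s + (n + 1 + (d - 1) * n) * 2 + (k + 1) * (n + 1 + (d - 1) * n) ≤
      (n + 1) * (k + 2) + (d - 1) * n * (n + 1) + (k + 1) * N) :
    s < (k + 1) * (N - (d + 1)) + 2 * k := by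
  obtain ⟨D, rfl⟩ := Nat.exists_eq_add_of_le' hd
  obtain ⟨j, hj⟩ := Nat.exists_eq_add_of_le hnk
  have hN : (k + 1) * N ≤ (k + 1) * (N - (D + 1 + 1) + (D + 1 + 1)) := by gcongr; omega
  generalize N - (D + 1 + 1) = N' at *
  rw [Nat.add_sub_cancel] at h
  zify at h hN hj ⊢
  rw [show (k : ℤ) = n + j - 1 by omega] at h hN ⊢
  -- The two sides differ by `(n - 1) * ((d - 1) * (k + 1 - n) + 1)`.
  have hpos : (0 : ℤ) < (n - 1) * (D * j + 1) := mul_pos (by omega) (by positivity)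
  linarith

lemma dimSet_lt_dimSet_lineLocus [IsAlgClosed K] [Finite σ] [Finite J] {k : ℕ}
    (hσ : Nat.card σ = k + 2) (hJ : Nat.card J = k + 1) (hd : 1 ≤ d)
    [TopologicalSpace (FormTuple K σ J d)] [IsZariski K (FormTuple K σ J d)]
    {C : Set (FormTuple K σ J d)} (hC : IsIrreducible C)
    (hCZ : ∀ F ∈ C, (2 : WithBot ℕ∞) ≤ ringKrullDim (MvPolynomial σ K ⧸
      Ideal.span (Set.range fun i => (F i : MvPolynomial σ K))))
    (hCL : ¬ C ⊆ lineLocus K σ J d) : dimSet C < dimSet (lineLocus K σ J d) := by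
  obtain ⟨s, f, hf, hdim⟩ := exists_algIndepOn_dimSet_eq (K := K) hC
  have hfpoly (t) : IsPolynomialMap K (f t) := isPolynomialMap_linearMap _
  have hdense : C ⊆ closure (C \ lineLocus K σ J d) := by
    refine (isPreirreducible_iff_isClosed_union_isClosed.1 hC.2 _ _ isClosed_closure
      isClosed_lineLocus fun F hF => ?_).resolve_right hCL
    by_cases hFL : F ∈ lineLocus K σ J d
    exacts [.inr hFL, .inl (subset_closure ⟨hF, hFL⟩)]
  obtain ⟨⟨⟨⟨n, hn⟩, hn2⟩, c, B⟩, hfB⟩ := AlgIndepOn.exists_of_iUnion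
    (ι := Σ n : {n : Fin (k + 2) // 2 ≤ n.1}, (Fin 2 → σ) ×
      (Fin (n.1 + 1) ⊕ Fin ((d - 1) * n.1) → Exponent σ d))
    (S := fun q => abundantZerosLocus J q.2.1 q.2.2) <|
    (hf.of_subset_closure hfpoly hdense).mono fun F hF => by
      obtain ⟨n, hn2, hnσ, c, B, hFB⟩ := exists_mem_abundantZerosLocus hd (hCZ F hF.1) hF.2
      exact Set.mem_iUnion.2 ⟨⟨⟨⟨n, hσ ▸ hnσ⟩, hn2⟩, c, B⟩, hFB⟩
  have hcount := natCard_add_le_of_algIndepOn_abundantZerosLocus hfpoly hfB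
  simp only [Nat.card_fin, hσ, hJ] at hcount
  have hlt := lt_dim_lineLocus_of_incidence_bound hn2 (Nat.lt_succ_iff.1 hn) hd hcount
  have hge := natCard_le_dimSet_lineLocus (K := K) (κ := Fin k)
    (finSumFinEquiv.trans (Finite.equivFinOfCardEq (hσ.trans (add_comm k 2))).symm) hd
    (Fin.castSuccEmb.trans (Finite.equivFinOfCardEq hJ).symm.toEmbedding)
  rw [hJ, Nat.card_fin] at hge
  exact hdim.trans_lt ((Nat.cast_lt.2 hlt).trans_le hge)

end Components

/-- For `r ≥ 2` and equal degrees `d_1 = ⋯ = d_r = d ≥ 1`, let `Z` be the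
locus of `r`-tuples `(F_1, …, F_r)` of degree-`d` forms with `dim V(F_1, …, F_r) ≥ 1`, and
let `L` be the locus of tuples vanishing on a common line. Then `Z` has a unique irreducible
component of maximal dimension, and this component equals `L`: i.e. `L` is an irreducible
component (a maximal irreducible subset) of `Z`, and every other irreducible component of `Z`
has strictly smaller dimension. -/
theorem statement2 [IsAlgClosed K] (r dd : ℕ) (hr : 2 ≤ r) (hdd : 1 ≤ dd)
    (Z L : Set (tupleSpace K r r (fun _ => dd)))
    (hZ : Z = {F | vdimGE r r (fun i => (F i : MvPolynomial (Fin (r + 1)) K)) 1})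
    (hL : L = {F | vanishOnCommonLine K F}) :
    Maximal (fun t => t ⊆ Z ∧ IsIrreducible t) L ∧
      ∀ C : Set (tupleSpace K r r (fun _ => dd)),
        Maximal (fun t => t ⊆ Z ∧ IsIrreducible t) C → C ≠ L →
          dimSet C < dimSet L := by
  obtain ⟨k, rfl⟩ := Nat.exists_eq_add_of_le' (one_le_two.trans hr)
  replace hL : L = lineLocus K (Fin (k + 2)) (Fin (k + 1)) dd := hL
  subst hZ hL
  have hirr := isIrreducible_lineLocus (K := K) (σ := Fin (k + 2)) (J := Fin (k + 1)) (d := dd)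
  have hLZ : lineLocus K (Fin (k + 2)) (Fin (k + 1)) dd ⊆ {F | vdimGE _ _ (fun i => (F i).1) 1} :=
    fun _ hF => two_le_ringKrullDim_of_mem_lineLocus hF
  have hlt {C : Set (tupleSpace K (k + 1) (k + 1) fun _ => dd)} (hC : IsIrreducible C)
      (hCZ : C ⊆ {F | vdimGE _ _ (fun i => (F i).1) 1}) (hCL : ¬ C ⊆ lineLocus K _ _ dd) :
      dimSet C < dimSet (lineLocus K (Fin (k + 2)) (Fin (k + 1)) dd) :=
    dimSet_lt_dimSet_lineLocus (Nat.card_fin _) (Nat.card_fin _) hdd hC (fun _ hF => hCZ hF) hCL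
  refine ⟨⟨⟨hLZ, hirr⟩, fun C hC hLC => ?_⟩, fun C hC hne => ?_⟩
  · by_contra hCL
    exact (hlt hC.2 hC.1 hCL).not_ge (dimSet_mono hLC)
  · exact hlt hC.prop.2 hC.prop.1 fun hCL =>
      hne (hCL.antisymm (hC.le_of_ge ⟨hLZ, hirr⟩ hCL))

end Statement2
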